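/- arXiv:2410.22222 — 3 statements merged into one kernel-verified Lean document; each statement's English description precedes it below -/
import Mathlib

section
/- For H an abelian group of odd order and G = H ⋊ ℤ/2ℤ with inversion action, the inflation/corestriction map induces an isomorphism H₂(H, ℤ) ≅ H₂(G, ℤ); in particular H₂(G, ℤ) ≅ ∧²H. -/
/-!
Everything is tested against characters: a chain is a boundary as soon as every 2-cocycle with
values in the injective group `ℚ/ℤ` vanishes on it (`mem_of_characters`), and a `ℚ/ℤ`-valued cocycle
vanishes on all cycles exactly when it is a coboundary (`cochainEval_coboundary`,
`exists_coboundary`). This replaces the spectral sequence by a comparison of `H²(-, ℚ/ℤ)`.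

*The abelian group.* The bilinear cocycle `a ∧ b` gives a map `H₂(H) → ∧²H`. It sends the cycle
`[a|b] - [b|a]` to `2 a ∧ b`, hence is surjective as `∧²H` has odd exponent
(`exists_cycle_wedge`). For injectivity (`boundary_of_wedge_eq_zero`), subtract from a cocycle `f`
half of its commutator form `f(a,b) - f(b,a)`, which factors through `∧²H`; what remains is
symmetric, so it defines an abelian extension of `H` by `ℚ/ℤ`, which splits
(`exists_coboundary_of_symm`).

*The semidirect product `G`.* The form `a ∧ b` is invariant under inversion, so it extends to the
cocycle `(x, y) ↦ x.left ∧ (x.right • y.left)` on `G` (`isTwoCocycle_extended_wedge`). The resulting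
map `H₂(G) → ∧²H` composed with `H₂(H) → H₂(G)` is the isomorphism `H₂(H) ≅ ∧²H`, so
`H₂(H) → H₂(G)` is injective. For surjectivity one shows that a cocycle on `G` which is a coboundary
on `H` is a coboundary (`exists_coboundary_semidirect`). In terms of the central extension: the lift
of the involution conjugates the lift of `h` to that of `h⁻¹` times `χ(h)` for a homomorphism `χ`, and
its square is a constant `d`; `χ` has a half since `H` has odd exponent, `d` has one since `ℚ/ℤ` is
divisible, and correcting the lifts by these halves splits the extension.
-/


/-- Degree-2 differential of the inhomogeneous bar complex computing group homology
with trivial `ℤ` coefficients: `d₂[a|b] = [b] - [ab] + [a]`. -/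
noncomputable def barD2 (G : Type*) [Group G] : ((G × G) →₀ ℤ) →ₗ[ℤ] (G →₀ ℤ) :=
  Finsupp.lsum ℤ fun p =>
    (Finsupp.lsingle p.2 - Finsupp.lsingle (p.1 * p.2) + Finsupp.lsingle p.1)

/-- Degree-3 differential: `d₃[a|b|c] = [b|c] - [ab|c] + [a|bc] - [a|b]`. -/
noncomputable def barD3 (G : Type*) [Group G] : ((G × G × G) →₀ ℤ) →ₗ[ℤ] ((G × G) →₀ ℤ) :=
  Finsupp.lsum ℤ fun t =>
    (Finsupp.lsingle (t.2.1, t.2.2) - Finsupp.lsingle (t.1 * t.2.1, t.2.2)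
      + Finsupp.lsingle (t.1, t.2.1 * t.2.2) - Finsupp.lsingle (t.1, t.2.1))

/-- Second group homology `H₂(G, ℤ)` = 2-cycles modulo 2-boundaries. -/
noncomputable abbrev H2M (G : Type*) [Group G] :=
  ↥(LinearMap.ker (barD2 G)) ⧸
    (LinearMap.range (barD3 G)).comap (LinearMap.ker (barD2 G)).subtype

section

/-! ### Cochains on the bar complex -/

variable {G H D : Type*}

/-- Inhomogeneous 2-cocycles on `G` with values in a trivial `G`-module `D`. -/
def IsTwoCocycle [Mul G] [Add D] (f : G → G → D) : Prop :=
  ∀ a b c, f b c + f a (b * c) = f (a * b) c + f a b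

/-- The linear extension of a 2-cochain `f` to the degree-2 bar chains. -/
noncomputable def cochainEval [AddCommGroup D] (f : G → G → D) : ((G × G) →₀ ℤ) →ₗ[ℤ] D :=
  Finsupp.linearCombination ℤ fun p => f p.1 p.2

@[simp] lemma cochainEval_single [AddCommGroup D] (f : G → G → D) (p : G × G) (n : ℤ) :
    cochainEval f (Finsupp.single p n) = n • f p.1 p.2 := by
  simp [cochainEval]

@[simp] lemma barD2_single [Group G] (p : G × G) (n : ℤ) :
    barD2 G (Finsupp.single p n) =
      Finsupp.single p.2 n - Finsupp.single (p.1 * p.2) n + Finsupp.single p.1 n := by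
  simp [barD2]

@[simp] lemma barD3_single [Group G] (t : G × G × G) (n : ℤ) :
    barD3 G (Finsupp.single t n) =
      Finsupp.single (t.2.1, t.2.2) n - Finsupp.single (t.1 * t.2.1, t.2.2) n
        + Finsupp.single (t.1, t.2.1 * t.2.2) n - Finsupp.single (t.1, t.2.1) n := by
  simp [barD3]

lemma barD2_map [Group G] [Group H] (i : H →* G) (z : (H × H) →₀ ℤ) :
    barD2 G (Finsupp.lmapDomain ℤ ℤ (Prod.map i i) z)
      = Finsupp.lmapDomain ℤ ℤ i (barD2 H z) := by
  have : barD2 G ∘ₗ Finsupp.lmapDomain ℤ ℤ (Prod.map i i)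
      = Finsupp.lmapDomain ℤ ℤ i ∘ₗ barD2 H := by
    ext p : 2
    simp only [LinearMap.comp_apply, Finsupp.lsingle_apply, barD2_single, map_sub, map_add]
    simp
  exact LinearMap.congr_fun this z

lemma barD3_map [Group G] [Group H] (i : H →* G) (y : (H × H × H) →₀ ℤ) :
    barD3 G (Finsupp.lmapDomain ℤ ℤ (Prod.map i (Prod.map i i)) y)
      = Finsupp.lmapDomain ℤ ℤ (Prod.map i i) (barD3 H y) := by
  have : barD3 G ∘ₗ Finsupp.lmapDomain ℤ ℤ (Prod.map i (Prod.map i i))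
      = Finsupp.lmapDomain ℤ ℤ (Prod.map i i) ∘ₗ barD3 H := by
    ext p : 2
    simp only [LinearMap.comp_apply, Finsupp.lsingle_apply, barD3_single, map_sub, map_add]
    simp
    rfl
  exact LinearMap.congr_fun this y

lemma cochainEval_eq [AddCommGroup D] (χ : ((G × G) →₀ ℤ) →ₗ[ℤ] D) :
    cochainEval (fun a b => χ (Finsupp.single (a, b) 1)) = χ := by
  ext p
  simp

lemma cochainEval_boundary [Group G] [AddCommGroup D] {f : G → G → D} (hf : IsTwoCocycle f)
    {z : (G × G) →₀ ℤ} (hz : z ∈ LinearMap.range (barD3 G)) : cochainEval f z = 0 := by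
  obtain ⟨y, rfl⟩ := hz
  have : cochainEval f ∘ₗ barD3 G = 0 := by
    ext t
    have := hf t.1 t.2.1 t.2.2
    simp
    grind
  exact LinearMap.congr_fun this y

lemma isTwoCocycle_of_boundary [Group G] [AddCommGroup D] (χ : ((G × G) →₀ ℤ) →ₗ[ℤ] D)
    (hχ : ∀ z ∈ LinearMap.range (barD3 G), χ z = 0) :
    IsTwoCocycle fun a b => χ (Finsupp.single (a, b) 1) := by
  intro a b c
  have := hχ _ ⟨Finsupp.single (a, b, c) 1, rfl⟩
  simp at this
  grind

lemma cochainEval_coboundary [Group G] [AddCommGroup D] {f : G → G → D} {g : G → D}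
    (hg : ∀ a b, f a b = g a + g b - g (a * b)) {z : (G × G) →₀ ℤ}
    (hz : z ∈ LinearMap.ker (barD2 G)) : cochainEval f z = 0 := by
  have : cochainEval f = Finsupp.linearCombination ℤ g ∘ₗ barD2 G := by
    ext t
    simp [hg]
    abel
  rw [this, LinearMap.comp_apply, LinearMap.mem_ker.1 hz, map_zero]

lemma cochainEval_map [Mul G] [Mul H] [AddCommGroup D] (f : G → G → D) (i : H → G)
    (z : (H × H) →₀ ℤ) :
    cochainEval f (Finsupp.lmapDomain ℤ ℤ (Prod.map i i) z)
      = cochainEval (fun a b => f (i a) (i b)) z := by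
  have : cochainEval f ∘ₗ Finsupp.lmapDomain ℤ ℤ (Prod.map i i)
      = cochainEval (fun a b => f (i a) (i b)) := by
    ext t
    simp
  exact LinearMap.congr_fun this z

/-- The converse of `cochainEval_coboundary` when `D` is injective: factor through `range barD2`
and extend. -/
lemma exists_coboundary [Group G] [AddCommGroup D] (hD : Module.Baer ℤ D) (f : G → G → D)
    (h : ∀ z ∈ LinearMap.ker (barD2 G), cochainEval f z = 0) :
    ∃ g : G → D, ∀ a b, f a b = g a + g b - g (a * b) := by
  obtain ⟨k, hk⟩ := hD.extension_property
    ((LinearMap.ker (barD2 G)).liftQ (barD2 G) le_rfl)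
    (LinearMap.ker_eq_bot.1 (Submodule.ker_liftQ_eq_bot _ _ _ le_rfl))
    ((LinearMap.ker (barD2 G)).liftQ (cochainEval f) h)
  refine ⟨fun a => k (Finsupp.single a 1), fun a b => ?_⟩
  have : k (barD2 G (Finsupp.single (a, b) 1)) = cochainEval f (Finsupp.single (a, b) 1) :=
    LinearMap.congr_fun hk (Submodule.Quotient.mk (Finsupp.single (a, b) 1))
  simp at this
  grind

/-- Membership in a subgroup is detected by characters. -/
lemma mem_of_characters {M : Type*} [AddCommGroup M] (N : Submodule ℤ M) (x : M)
    (h : ∀ χ : M →ₗ[ℤ] AddCircle (1 : ℚ), (∀ n ∈ N, χ n = 0) → χ x = 0) : x ∈ N := by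
  rw [← Submodule.Quotient.mk_eq_zero]
  refine CharacterModule.eq_zero_of_character_apply fun c => ?_
  refine h ((show (M ⧸ N) →+ AddCircle (1 : ℚ) from c).toIntLinearMap ∘ₗ N.mkQ) fun n hn => ?_
  have : N.mkQ n = 0 := (Submodule.Quotient.mk_eq_zero N).2 hn
  simp [this]

/-! ### Symmetric cocycles on abelian groups -/

/-- The underlying set `H × D` of the extension of `H` by `D` attached to a cocycle `f`. -/
@[ext] structure CocycleExt (f : H → H → D) where
  base : H
  fibre : D

/-- The abelian extension of `H` by `D` attached to a symmetric cocycle. The cocycle need not be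
normalised, so the zero element is `(1, -f 1 1)`. -/
abbrev CocycleExt.addCommGroup [CommGroup H] [AddCommGroup D] {f : H → H → D}
    (hf : IsTwoCocycle f) (hs : ∀ a b, f a b = f b a) : AddCommGroup (CocycleExt f) :=
  letI : Add (CocycleExt f) := ⟨fun x y => ⟨x.1 * y.1, x.2 + y.2 + f x.1 y.1⟩⟩
  letI : Zero (CocycleExt f) := ⟨⟨1, -f 1 1⟩⟩
  letI : Neg (CocycleExt f) := ⟨fun x => ⟨x.1⁻¹, -x.2 - f x.1⁻¹ x.1 - f 1 1⟩⟩
  have h1 : ∀ a, f 1 a = f 1 1 := fun a => by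
    have := hf 1 1 a
    simp at this
    grind
  { add_assoc := fun x y z => by
      ext
      · exact mul_assoc _ _ _
      · change x.2 + y.2 + f x.1 y.1 + z.2 + f (x.1 * y.1) z.1
          = x.2 + (y.2 + z.2 + f y.1 z.1) + f x.1 (y.1 * z.1)
        have := hf x.1 y.1 z.1
        grind
    zero_add := fun x => by
      ext
      · exact one_mul _
      · change -f 1 1 + x.2 + f 1 x.1 = x.2
        rw [h1]
        grind
    add_zero := fun x => by
      ext
      · exact mul_one _
      · change x.2 + -f 1 1 + f x.1 1 = x.2
        rw [hs x.1 1, h1]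
        grind
    neg_add_cancel := fun x => by
      ext
      · exact inv_mul_cancel _
      · change -x.2 - f x.1⁻¹ x.1 - f 1 1 + x.2 + f x.1⁻¹ x.1 = -f 1 1
        abel
    add_comm := fun x y => by
      ext
      · exact mul_comm _ _
      · change x.2 + y.2 + f x.1 y.1 = y.2 + x.2 + f y.1 x.1
        rw [hs]
        abel
    nsmul := nsmulRec
    zsmul := zsmulRec }

/-- `Ext(H, D) = 0` for `D` injective: a retraction of the abelian extension attached to `f` onto `D`
exhibits the symmetric cocycle `f` as a coboundary. -/
lemma exists_coboundary_of_symm [CommGroup H] [AddCommGroup D] (hD : Module.Baer ℤ D)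
    {f : H → H → D} (hf : IsTwoCocycle f) (hs : ∀ a b, f a b = f b a) :
    ∃ g : H → D, ∀ a b, f a b = g a + g b - g (a * b) := by
  let _ := CocycleExt.addCommGroup hf hs
  have hadd : ∀ x y : CocycleExt f, x + y = ⟨x.1 * y.1, x.2 + y.2 + f x.1 y.1⟩ := fun _ _ => rfl
  have h1 : ∀ a, f a 1 = f 1 1 := fun a => by
    have := hf a 1 1
    simp at this
    grind
  let i : D →+ CocycleExt f := AddMonoidHom.mk' (fun d => ⟨1, d - f 1 1⟩) fun a b => by
    rw [hadd]
    ext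
    · simp
    · simp only
      abel
  have hi : Function.Injective i := fun a b hab => by
    have : a - f 1 1 = b - f 1 1 := congrArg CocycleExt.fibre hab
    simpa using this
  obtain ⟨r, hr⟩ := hD.extension_property_addMonoidHom i hi (AddMonoidHom.id D)
  refine ⟨fun a => r ⟨a, 0⟩, fun a b => ?_⟩
  have h2 : (⟨a, 0⟩ + ⟨b, 0⟩ : CocycleExt f) = ⟨a * b, 0⟩ + i (f a b) := by
    rw [hadd, hadd]
    ext
    · simp [i]
    · simp [i, h1]
  have h3 := congrArg r h2
  have h4 : r (i (f a b)) = f a b := DFunLike.congr_fun hr _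
  rw [map_add, map_add, h4] at h3
  simp only
  rw [h3]
  abel

/-! ### The map to the exterior square -/

/-- On an abelian group, `f(a, b) - f(b, a)` is additive in `a` for every 2-cocycle `f`. -/
lemma commutator_mul_left [CommGroup H] [AddCommGroup D] {f : H → H → D} (hf : IsTwoCocycle f)
    (a b c : H) :
    f (a * b) c - f c (a * b) = (f a c - f c a) + (f b c - f c b) := by
  have h1 := hf a b c
  have h2 := hf a c b
  have h3 := hf c a b
  rw [mul_comm c b] at h2
  rw [mul_comm c a] at h3
  grind

/-- The alternating bilinear form `f(a, b) - f(b, a)` attached to a 2-cocycle on an abelian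
group. -/
noncomputable def commutatorForm [CommGroup H] [AddCommGroup D] {f : H → H → D}
    (hf : IsTwoCocycle f) : (Additive H) [⋀^Fin 2]→ₗ[ℤ] D :=
  let B : Additive H →+ Additive H →+ D :=
    AddMonoidHom.mk' (fun a => AddMonoidHom.mk' (fun b => f a.toMul b.toMul - f b.toMul a.toMul)
      fun b c => by
        have := commutator_mul_left hf b.toMul c.toMul a.toMul
        simp only [toMul_add]
        grind)
      fun a b => by
        ext c
        exact commutator_mul_left hf a.toMul b.toMul c
  { toFun := fun v => B (v 0) (v 1)
    map_update_add' := fun v i x y => by fin_cases i <;> simp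
    map_update_smul' := fun v i n x => by fin_cases i <;> simp
    map_eq_zero_of_eq' := fun v i j hij hne => by
      have : v 0 = v 1 := by
        fin_cases i <;> fin_cases j <;> first | exact absurd rfl hne | exact hij | exact hij.symm
      simp [B, this] }

lemma commutatorForm_apply [CommGroup H] [AddCommGroup D] {f : H → H → D}
    (hf : IsTwoCocycle f) (v : Fin 2 → Additive H) :
    commutatorForm hf v = f (v 0).toMul (v 1).toMul - f (v 1).toMul (v 0).toMul := rfl

/-- The element `a ∧ b` of `∧²H` for `a b : H`; as a function of `(a, b)` it is bilinear, hence a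
2-cocycle. -/
noncomputable def wedge [CommGroup H] (a b : H) : ⋀[ℤ]^2 (Additive H) :=
  exteriorPower.ιMulti ℤ 2 ![Additive.ofMul a, Additive.ofMul b]

section wedge
variable [CommGroup H]

lemma wedge_mul_left (a b c : H) : wedge (a * b) c = wedge a c + wedge b c := by
  have := (exteriorPower.ιMulti ℤ 2).map_update_add ![(0 : Additive H), Additive.ofMul c] 0
    (Additive.ofMul a) (Additive.ofMul b)
  have hu : ∀ x y z : Additive H, Function.update ![x, z] 0 y = ![y, z] := fun x y z => by
    ext i
    fin_cases i <;> rfl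
  rwa [hu, hu, hu] at this

lemma wedge_swap (a b : H) : wedge a b = - wedge b a := by
  have := (exteriorPower.ιMulti ℤ 2).map_swap ![Additive.ofMul b, Additive.ofMul a]
    (i := 0) (j := 1) (by simp)
  rw [wedge, wedge, ← this]
  congr 1
  ext i
  fin_cases i <;> simp

lemma wedge_mul_right (a b c : H) : wedge a (b * c) = wedge a b + wedge a c := by
  rw [wedge_swap, wedge_mul_left, wedge_swap a b, wedge_swap a c]
  abel

lemma wedge_inv_inv (a b : H) : wedge a⁻¹ b⁻¹ = wedge a b := by
  have h1 : ∀ x y : H, wedge x⁻¹ y = - wedge x y := fun x y => by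
    have h := wedge_mul_left x⁻¹ x y
    have h' := wedge_mul_left 1 1 y
    simp at h h'
    grind
  rw [h1, wedge_swap, h1, wedge_swap a b, neg_neg]

lemma isTwoCocycle_wedge : IsTwoCocycle (wedge (H := H)) := fun a b c => by
  rw [wedge_mul_left, wedge_mul_right]
  abel

lemma wedge_span : Submodule.span ℤ (Set.range fun p : H × H => wedge p.1 p.2) = ⊤ := by
  rw [← exteriorPower.ιMulti_span]
  congr 1
  ext x
  constructor
  · rintro ⟨p, rfl⟩
    exact ⟨_, rfl⟩
  · rintro ⟨v, rfl⟩
    refine ⟨((v 0).toMul, (v 1).toMul), ?_⟩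
    simp only [wedge]
    congr 1
    ext i
    fin_cases i <;> rfl

end wedge

/-! ### Second homology of an abelian group of odd order -/

section odd
variable [CommGroup H] {n m : ℕ}

/-- `∧²H` is killed by any exponent of `H`. -/
lemma wedge_nsmul (hn : ∀ h : H, h ^ n = 1) (a b : H) : n • wedge a b = 0 := by
  have h1 : wedge 1 b = 0 := by simpa using wedge_mul_left 1 1 b
  have : ∀ k : ℕ, wedge (a ^ k) b = k • wedge a b := fun k => by
    induction k with
    | zero => simpa using h1
    | succ k ih => rw [pow_succ, wedge_mul_left, ih, succ_nsmul]
  rw [← this, hn, h1]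

/-- `H₂(H, ℤ) → ∧²H`, `[a|b] ↦ a ∧ b`, is surjective: `a ∧ b` is the image of the cycle
`(n + 1)/2 • ([a|b] - [b|a])`. -/
lemma exists_cycle_wedge (hn : ∀ h : H, h ^ n = 1) (hm : n + 1 = 2 * m)
    (x : ⋀[ℤ]^2 (Additive H)) :
    ∃ z ∈ LinearMap.ker (barD2 H), cochainEval wedge z = x := by
  suffices h : (LinearMap.ker (barD2 H)).map (cochainEval wedge) = ⊤ by
    exact Submodule.mem_map.1 (h ▸ Submodule.mem_top (x := x))
  rw [eq_top_iff, ← wedge_span, Submodule.span_le]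
  rintro _ ⟨⟨a, b⟩, rfl⟩
  refine ⟨m • (Finsupp.single (a, b) 1 - Finsupp.single (b, a) 1), ?_, ?_⟩
  · have h : barD2 H (Finsupp.single (a, b) 1 - Finsupp.single (b, a) 1) = 0 := by
      rw [map_sub, barD2_single, barD2_single, mul_comm b a]
      abel
    rw [SetLike.mem_coe, LinearMap.mem_ker, map_nsmul, h, nsmul_zero]
  · simp only [map_nsmul, map_sub, cochainEval_single, one_smul]
    rw [wedge_swap b a, sub_neg_eq_add, ← two_nsmul, ← mul_nsmul, ← hm, succ_nsmul,
      wedge_nsmul hn, zero_add]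

/-- `H₂(H, ℤ) → ∧²H` is injective. Modulo the pull-back of a linear form on `∧²H`, every cocycle
`f` becomes symmetric: subtract half of its commutator form. -/
lemma boundary_of_wedge_eq_zero (hn : ∀ h : H, h ^ n = 1) (hm : n + 1 = 2 * m)
    {z : (H × H) →₀ ℤ} (hz : z ∈ LinearMap.ker (barD2 H)) (hw : cochainEval wedge z = 0) :
    z ∈ LinearMap.range (barD3 H) := by
  refine mem_of_characters _ _ fun χ hχ => ?_
  have hf := isTwoCocycle_of_boundary χ hχ
  have hχf := cochainEval_eq χ
  set f : H → H → AddCircle (1 : ℚ) := fun a b => χ (Finsupp.single (a, b) 1)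
  let L := exteriorPower.alternatingMapLinearEquiv (commutatorForm hf)
  have hL : ∀ a b, L (wedge a b) = f a b - f b a := fun a b =>
    exteriorPower.alternatingMapLinearEquiv_apply_ιMulti _ _
  let f' : H → H → AddCircle (1 : ℚ) := fun a b => f a b - m • L (wedge a b)
  have hf' : IsTwoCocycle f' := fun a b c => by
    have h1 := hf a b c
    simp only [f', wedge_mul_left, wedge_mul_right, map_add, nsmul_add]
    grind
  have hs : ∀ a b, f' a b = f' b a := fun a b => by
    have h1 : (n + 1) • (f a b - f b a) = f a b - f b a := by
      rw [← hL, succ_nsmul, ← map_nsmul, wedge_nsmul hn, map_zero, zero_add]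
    rw [hm, two_mul, add_nsmul] at h1
    simp only [f', hL]
    rw [← neg_sub (f a b) (f b a), neg_nsmul]
    grind
  obtain ⟨g, hg⟩ := exists_coboundary_of_symm (Module.Baer.of_divisible _) hf' hs
  have hev : cochainEval f = cochainEval f' + m • (L ∘ₗ cochainEval wedge) := by
    ext p
    simp [f']
  rw [← hχf, hev, LinearMap.add_apply, cochainEval_coboundary hg hz]
  simp [hw]

end odd

/-! ### The semidirect product -/

section semidirect
variable [CommGroup H] {φ : Multiplicative (ZMod 2) →* MulAut H}

/-- A bilinear form on `H` invariant under inversion extends to a 2-cocycle on `H ⋊ ℤ/2ℤ`. -/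
lemma isTwoCocycle_extended_wedge (hφ : ∀ h : H, φ (Multiplicative.ofAdd 1) h = h⁻¹) :
    IsTwoCocycle fun x y : H ⋊[φ] Multiplicative (ZMod 2) =>
      wedge x.left (φ x.right y.left) := by
  have hinv : ∀ (s : Multiplicative (ZMod 2)) (a b : H),
      wedge (φ s a) (φ s b) = wedge a b := fun s a b => by
    obtain rfl | rfl : s = 1 ∨ s = Multiplicative.ofAdd 1 := by
      revert s
      decide
    · simp
    · rw [hφ, hφ, wedge_inv_inv]
  intro x y z
  simp only [SemidirectProduct.mul_left, SemidirectProduct.mul_right, map_mul, wedge_mul_left,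
    wedge_mul_right, MulAut.mul_apply]
  rw [← hinv x.right y.left (φ y.right z.left)]
  abel

/-- A cocycle on `H ⋊ ℤ/2ℤ` that vanishes on `H` and on the pairs `(h, τ)`,
where `τ` generates `ℤ/2ℤ`, is a coboundary.
It is determined by the homomorphism `χ = f(τ, ·)` on `H` and the value `f(τ, τ)`, and halves of
these two define the cochain. -/
lemma exists_coboundary_of_normalised [AddCommGroup D] {n m : ℕ}
    (hφ : ∀ h : H, φ (Multiplicative.ofAdd 1) h = h⁻¹)
    (hn : ∀ h : H, h ^ n = 1) (hm : n + 1 = 2 * m) (hD : ∀ d : D, ∃ e : D, e + e = d)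
    {f : H ⋊[φ] Multiplicative (ZMod 2) → H ⋊[φ] Multiplicative (ZMod 2) → D}
    (hf : IsTwoCocycle f)
    (h0 : ∀ a b, f (SemidirectProduct.inl a) (SemidirectProduct.inl b) = 0)
    (h1 : ∀ a, f (SemidirectProduct.inl a)
      (SemidirectProduct.inr (Multiplicative.ofAdd 1)) = 0) :
    ∃ g : _ → D, ∀ x y, f x y = g x + g y - g (x * y) := by
  set i : H →* H ⋊[φ] Multiplicative (ZMod 2) := SemidirectProduct.inl with hi
  set τ : H ⋊[φ] Multiplicative (ZMod 2) := SemidirectProduct.inr (Multiplicative.ofAdd 1) with hτ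
  have hcases : ∀ x, ∃ a, x = i a ∨ x = i a * τ := fun x => by
    refine ⟨x.left, ?_⟩
    have hx := SemidirectProduct.inl_left_mul_inr_right x
    obtain h | h : x.right = 1 ∨ x.right = Multiplicative.ofAdd 1 := by
      generalize x.right = s
      revert s
      decide
    · left
      rw [h, map_one, mul_one] at hx
      exact hx.symm
    · right
      rw [h] at hx
      exact hx.symm
  have hττ : τ * τ = 1 := by
    rw [hτ, ← map_mul]
    exact map_one _
  have hτi : ∀ a, τ * i a = i a⁻¹ * τ := fun a => by
    ext <;> simp [hi, hτ, hφ]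
  have f2 : ∀ a b, f (i a) (i b * τ) = 0 := fun a b => by
    have e := hf (i a) (i b) τ
    rwa [h1, ← map_mul, h1, h0, zero_add, zero_add] at e
  have f3 : ∀ a b, f (i a * τ) (i b) = f τ (i b) := fun a b => by
    have e := hf (i a) τ (i b)
    rw [hτi, f2, h1, add_zero, add_zero] at e
    exact e.symm
  have f4 : ∀ a b, f (i a * τ) (i b * τ) = f τ (i b) + f τ τ := fun a b => by
    have e := hf (i a) τ (i b * τ)
    rw [← mul_assoc, hτi, mul_assoc, hττ, mul_one, h0, h1, add_zero, add_zero] at e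
    have e' := hf τ (i b) τ
    have e'' := hf (i b⁻¹) τ τ
    rw [hττ, ← map_one i, h0, h1, add_zero, add_zero] at e''
    rw [hτi, h1, zero_add, ← e''] at e'
    rw [← e, e', add_comm]
  have hχ : ∀ a b, f τ (i (a * b)) = f τ (i a) + f τ (i b) := fun a b => by
    have e := hf τ (i a) (i b)
    rw [hτi, ← map_mul, f3, h0, zero_add] at e
    rw [e, add_comm]
  let χ : Additive H →+ D := AddMonoidHom.mk' (fun a => f τ (i a.toMul)) fun a b => hχ _ _
  let ψ : Additive H →+ D := m • χ
  have hψ : ∀ b, ψ (Additive.ofMul b) + ψ (Additive.ofMul b) = f τ (i b) := fun b => by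
    have e : n • χ (Additive.ofMul b) = 0 := by
      rw [← map_nsmul, ← ofMul_pow, hn, ofMul_one, map_zero]
    change m • χ (Additive.ofMul b) + m • χ (Additive.ofMul b) = χ (Additive.ofMul b)
    rw [← add_nsmul, ← two_mul, ← hm, succ_nsmul, e, zero_add]
  obtain ⟨e, he⟩ := hD (f τ τ)
  obtain ⟨g, hg1, hgτ⟩ : ∃ g : H ⋊[φ] Multiplicative (ZMod 2) → D,
      (∀ a, g (i a) = ψ (Additive.ofMul a)) ∧ ∀ a, g (i a * τ) = ψ (Additive.ofMul a) + e :=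
    ⟨fun x => ψ (Additive.ofMul x.left) + if x.right = 1 then 0 else e,
      fun a => by simp [hi], fun a => by simp [hi, hτ]⟩
  refine ⟨g, fun x y => ?_⟩
  obtain ⟨a, rfl | rfl⟩ := hcases x <;> obtain ⟨b, rfl | rfl⟩ := hcases y
  · rw [h0, ← map_mul, hg1, hg1, hg1, ofMul_mul, map_add, sub_self]
  · rw [f2, ← mul_assoc, ← map_mul, hg1, hgτ, hgτ, ofMul_mul, map_add]
    abel
  · rw [f3, mul_assoc, hτi, ← mul_assoc, ← map_mul, hg1, hgτ, hgτ, ofMul_mul, map_add, ofMul_inv,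
      map_neg, ← hψ]
    abel
  · have : i a * τ * (i b * τ) = i (a * b⁻¹) := by
      rw [mul_assoc, ← mul_assoc τ, hτi, mul_assoc, hττ, mul_one, map_mul]
    rw [f4, this, hg1, hgτ, hgτ, ofMul_mul, map_add, ofMul_inv, map_neg, ← hψ, ← he]
    abel

/-- Restriction `H²(H ⋊ ℤ/2ℤ, D) → H²(H, D)` is injective for `D` divisible: a cocycle that is a
coboundary on `H` can be normalised to vanish on `H` and on the pairs `(h, τ)`. -/
lemma exists_coboundary_semidirect [AddCommGroup D] {n m : ℕ}
    (hφ : ∀ h : H, φ (Multiplicative.ofAdd 1) h = h⁻¹)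
    (hn : ∀ h : H, h ^ n = 1) (hm : n + 1 = 2 * m) (hD : ∀ d : D, ∃ e : D, e + e = d)
    {f : H ⋊[φ] Multiplicative (ZMod 2) → H ⋊[φ] Multiplicative (ZMod 2) → D}
    (hf : IsTwoCocycle f) (k : H → D)
    (hk : ∀ a b, f (SemidirectProduct.inl a) (SemidirectProduct.inl b) = k a + k b - k (a * b)) :
    ∃ g : _ → D, ∀ x y, f x y = g x + g y - g (x * y) := by
  -- Adding the coboundary of `c` to `f` kills `f` on `H` and on the pairs `(h, τ)`.
  let c : H ⋊[φ] Multiplicative (ZMod 2) → D := fun x =>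
    if x.right = 1 then -k x.left else
      f (SemidirectProduct.inl x.left) (SemidirectProduct.inr (Multiplicative.ofAdd 1)) - k x.left
  have hc : ∀ a, c (SemidirectProduct.inl a) = -k a := fun a => by simp [c]
  have hcτ : ∀ a, c (SemidirectProduct.inl a * SemidirectProduct.inr (Multiplicative.ofAdd 1))
      = f (SemidirectProduct.inl a) (SemidirectProduct.inr (Multiplicative.ofAdd 1)) - k a :=
    fun a => by simp [c]
  obtain ⟨g, hg⟩ := exists_coboundary_of_normalised hφ hn hm hD
    (f := fun x y => f x y + (c x + c y - c (x * y)))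
    (fun x y z => by
      have := hf x y z
      simp only [mul_assoc]
      grind)
    (fun a b => by
      rw [← map_mul, hc, hc, hc, hk]
      abel)
    (fun a => by
      have h1 := hcτ 1
      have h2 := hf 1 1 (SemidirectProduct.inr (Multiplicative.ofAdd 1))
      have h3 := hk 1 1
      rw [map_one, one_mul] at h1
      rw [mul_one, one_mul] at h2
      rw [map_one, mul_one] at h3
      rw [hcτ, hc, h1]
      grind)
  exact ⟨fun x => g x - c x, fun x y => by grind [hg x y]⟩

end semidirect

end

/-- For `H` a finite abelian group of odd order and `G = H ⋊ ℤ/2ℤ` with the generator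
acting by inversion, the map on second integral group homology induced by the inclusion
`H → G` is an isomorphism `H₂(H, ℤ) ≅ H₂(G, ℤ)`: it sends cycles to cycles, is injective
and surjective modulo boundaries. In particular `H₂(G, ℤ) ≅ ∧²H`. -/
theorem stmt10 (H : Type*) [CommGroup H] [Finite H] (hodd : Odd (Nat.card H))
    (φ : Multiplicative (ZMod 2) →* MulAut H)
    (hφ : ∀ h : H, φ (Multiplicative.ofAdd 1) h = h⁻¹) :
    (∀ z ∈ LinearMap.ker (barD2 H),
        Finsupp.lmapDomain ℤ ℤ
            (Prod.map (SemidirectProduct.inl (φ := φ)) (SemidirectProduct.inl (φ := φ))) z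
          ∈ LinearMap.ker (barD2 (H ⋊[φ] Multiplicative (ZMod 2)))) ∧
    (∀ z ∈ LinearMap.ker (barD2 H),
        Finsupp.lmapDomain ℤ ℤ
            (Prod.map (SemidirectProduct.inl (φ := φ)) (SemidirectProduct.inl (φ := φ))) z
          ∈ LinearMap.range (barD3 (H ⋊[φ] Multiplicative (ZMod 2))) →
        z ∈ LinearMap.range (barD3 H)) ∧
    (∀ z ∈ LinearMap.ker (barD2 (H ⋊[φ] Multiplicative (ZMod 2))),
        ∃ w ∈ LinearMap.ker (barD2 H),
          z - Finsupp.lmapDomain ℤ ℤ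
              (Prod.map (SemidirectProduct.inl (φ := φ)) (SemidirectProduct.inl (φ := φ))) w
            ∈ LinearMap.range (barD3 (H ⋊[φ] Multiplicative (ZMod 2)))) ∧
    Nonempty (H2M (H ⋊[φ] Multiplicative (ZMod 2)) ≃ₗ[ℤ] ↥(⋀[ℤ]^2 (Additive H))) := by
  set i : H →* H ⋊[φ] Multiplicative (ZMod 2) := SemidirectProduct.inl with hi
  obtain ⟨l, hl⟩ := hodd
  have hn : ∀ h : H, h ^ Nat.card H = 1 := fun h => pow_card_eq_one'
  have hm : Nat.card H + 1 = 2 * (l + 1) := by omega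
  -- `ℚ/ℤ` is divisible, so every element can be halved.
  have hD : ∀ d : AddCircle (1 : ℚ), ∃ e, e + e = d := fun d =>
    ⟨DivisibleBy.div d (2 : ℤ), by rw [← two_zsmul, DivisibleBy.div_cancel _ two_ne_zero]⟩
  have hF := isTwoCocycle_extended_wedge hφ
  set F : H ⋊[φ] Multiplicative (ZMod 2) → H ⋊[φ] Multiplicative (ZMod 2) → _ :=
    fun x y => wedge x.left (φ x.right y.left)
  have hFi : ∀ z, cochainEval F (Finsupp.lmapDomain ℤ ℤ (Prod.map i i) z)
      = cochainEval wedge z := fun z => by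
    rw [cochainEval_map]
    congr 1
    ext a
    simp [F, hi]
  have hcycle : ∀ z ∈ LinearMap.ker (barD2 H),
      Finsupp.lmapDomain ℤ ℤ (Prod.map i i) z ∈ LinearMap.ker (barD2 _) := fun z hz => by
    rw [LinearMap.mem_ker, barD2_map, LinearMap.mem_ker.1 hz, map_zero]
  have hsurj : ∀ z ∈ LinearMap.ker (barD2 (H ⋊[φ] Multiplicative (ZMod 2))),
      ∃ w ∈ LinearMap.ker (barD2 H), z - Finsupp.lmapDomain ℤ ℤ (Prod.map i i) w
        ∈ LinearMap.range (barD3 (H ⋊[φ] Multiplicative (ZMod 2))) := fun z hz => by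
    -- It suffices that every character killing boundaries and cycles from `H` kills `z`.
    have : z ∈ LinearMap.range (barD3 (H ⋊[φ] Multiplicative (ZMod 2))) ⊔
        (LinearMap.ker (barD2 H)).map (Finsupp.lmapDomain ℤ ℤ (Prod.map i i)) := by
      refine mem_of_characters _ _ fun χ hχ => ?_
      have hf := isTwoCocycle_of_boundary χ fun y hy => hχ y (Submodule.mem_sup_left hy)
      rw [← cochainEval_eq χ]
      obtain ⟨k, hk⟩ := exists_coboundary (Module.Baer.of_divisible _)
        (fun a b : H => χ (Finsupp.single (i a, i b) 1)) fun w hw => by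
          rw [← hχ _ (Submodule.mem_sup_right ⟨w, hw, rfl⟩)]
          conv_rhs => rw [← cochainEval_eq χ, cochainEval_map]
      obtain ⟨g, hg⟩ := exists_coboundary_semidirect hφ hn hm hD hf k hk
      exact cochainEval_coboundary hg hz
    obtain ⟨y, hy, _, ⟨w, hw, rfl⟩, rfl⟩ := Submodule.mem_sup.1 this
    exact ⟨w, hw, by simpa using hy⟩
  refine ⟨hcycle, fun z hz hb => ?_, hsurj, ?_⟩
  · refine boundary_of_wedge_eq_zero hn hm hz ?_
    rw [← hFi]
    exact cochainEval_boundary hF hb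
  · refine ⟨LinearEquiv.ofBijective (Submodule.liftQ _
      (cochainEval F ∘ₗ (LinearMap.ker (barD2 _)).subtype)
      fun z hz => cochainEval_boundary hF hz) ⟨?_, ?_⟩⟩
    · rw [← LinearMap.ker_eq_bot, Submodule.ker_liftQ_eq_bot']
      refine le_antisymm (fun z hz => cochainEval_boundary hF hz) fun z hz => ?_
      obtain ⟨w, hw, hzw⟩ := hsurj z z.2
      have h0 : cochainEval F z = 0 := hz
      have h1 := cochainEval_boundary hF hzw
      rw [map_sub, h0, zero_sub, neg_eq_zero, hFi] at h1
      obtain ⟨y, rfl⟩ := boundary_of_wedge_eq_zero hn hm hw h1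
      have h3 := add_mem hzw (LinearMap.mem_range_self (barD3 _)
        (Finsupp.lmapDomain ℤ ℤ (Prod.map i (Prod.map i i)) y))
      rwa [barD3_map, sub_add_cancel] at h3
    · intro x
      obtain ⟨w, hw, rfl⟩ := exists_cycle_wedge hn hm x
      exact ⟨Submodule.Quotient.mk ⟨_, hcycle w hw⟩, hFi w⟩
end

section
/- Let M, N be modules over the ring of components R of Hurwitz spaces for (G,c) over a field k, and suppose there exists h ∈ c such that [h] acts invertibly on N and by 0 on M. Then the map S(m ⊗ g₁⊗⋯⊗gₙ ⊗ ω) = (-1)^{n+1} m ⊗ g₁⊗⋯⊗gₙ⊗h ⊗ [h]⁻¹·ω satisfies dS + Sd = id − T, where T(m⊗g₁⊗⋯⊗gₙ⊗ω) = m·[h] ⊗ h⁻¹g₁h⊗⋯⊗h⁻¹gₙh ⊗ [h]⁻¹ω = 0; hence the two-sided K-complex K(M, A, N) is exact. -/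
/-!
The complex is cubical: its differential is the alternating sum of the faces `a_i + b_i`, where `a_i`
moves the `i`-th group element to `M` and `b_i` moves it to `N`. Everything follows from its behaviour
under appending one group element `g` at the end of a tuple (`snocMap`). Removing an earlier entry
afterwards commutes with appending `g`, except that the action on `N` is replaced by its twist
`x ↦ ρN (g⁻¹ x g)`; removing `g` itself gives the operator `lastFace g`. This is `diff_snocMap`:
`d ∘ snocMap g = snocMap g ∘ d^g ± lastFace g`, with `d^g` the differential for the twisted action.

* The braid relations say that `lastFace g` intertwines `d^g` and `d` (`diff_lastFace`). Since every
  tuple of positive length is a `snoc`, `d ∘ d = 0` follows by induction on the length, simultaneously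
  for all actions on `N` (`diff_comp_diff`).
* For `g = h`, the inverse `σ` of `[h]` intertwines `d` with `d^h`, and `S = ± snocMap h ∘ σ`. So in
  `dS + Sd` only `lastFace h ∘ σ` survives. Its `N`-part is the identity, and its `M`-part is `T`, which
  vanishes because `[h]` acts by `0` on `M`.

Exactness follows from `dS + Sd = id` and `d ∘ d = 0`.
-/

open TensorProduct

section TwoSided

variable (k : Type*) [Field k] (G : Type*) [Group G] (c : Set G)
  (hc : ∀ g ∈ c, ∀ x : G, x⁻¹ * g * x ∈ c)
  (M : Type*) [AddCommGroup M] [Module k M]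
  (N : Type*) [AddCommGroup N] [Module k N]
  (ρM : G → Module.End k M) (ρN : G → Module.End k N)

/-- The "rightward" differential of the two-sided K-complex `K(M, A, N)`, whose
`(n+1)`-st term is modelled as finitely supported functions from tuples in `c^{n+1}`
to `M ⊗ N`:
`d_r(m⊗g₁⊗⋯⊗gₙ⊗ω) = Σᵢ(±1) m⊗g₁⊗⋯ĝᵢ⋯⊗gₙ⊗(gₙ⁻¹⋯g_{i+1}⁻¹gᵢg_{i+1}⋯gₙ)·ω`. -/
noncomputable def twoSidedDr (n : ℕ) :
    ((Fin (n + 1) → c) →₀ (M ⊗[k] N)) →ₗ[k] ((Fin n → c) →₀ (M ⊗[k] N)) :=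
  Finsupp.lsum k fun v =>
    ∑ i : Fin (n + 1),
      ((-1 : k) ^ ((i : ℕ) + 1)) •
        (Finsupp.lsingle (fun j => v (i.succAbove j))).comp
          (LinearMap.lTensor M
            (ρN (((List.ofFn fun j => (v j : G)).drop ((i : ℕ) + 1)).prod⁻¹ * (v i : G) *
                ((List.ofFn fun j => (v j : G)).drop ((i : ℕ) + 1)).prod)))

/-- The "leftward" differential of the two-sided K-complex:
`d_l(m⊗g₁⊗⋯⊗gₙ⊗ω) = Σᵢ(±1) m·[gᵢ]⊗(gᵢ⁻¹g₁gᵢ)⊗⋯⊗(gᵢ⁻¹g_{i-1}gᵢ)⊗g_{i+1}⊗⋯⊗gₙ⊗ω`. -/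
noncomputable def twoSidedDl (n : ℕ) :
    ((Fin (n + 1) → c) →₀ (M ⊗[k] N)) →ₗ[k] ((Fin n → c) →₀ (M ⊗[k] N)) :=
  Finsupp.lsum k fun v =>
    ∑ i : Fin (n + 1),
      ((-1 : k) ^ ((i : ℕ) + 1)) •
        (Finsupp.lsingle (fun j : Fin n =>
            if ((i.succAbove j : Fin (n + 1)) : ℕ) < (i : ℕ) then
              (⟨((v i : G))⁻¹ * (v (i.succAbove j) : G) * (v i : G),
                hc _ (v (i.succAbove j)).2 _⟩ : c)
            else v (i.succAbove j))).comp
          (LinearMap.rTensor N (ρM (v i : G)))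

/-- The chain homotopy `S(m ⊗ g₁⊗⋯⊗gₙ ⊗ ω) = (-1)^{n+1} m ⊗ g₁⊗⋯⊗gₙ⊗h ⊗ [h]⁻¹·ω`,
where `σ` is the inverse of the action of `[h]` on `N`. -/
noncomputable def twoSidedS (h : G) (hh : h ∈ c) (σ : Module.End k N) (n : ℕ) :
    ((Fin n → c) →₀ (M ⊗[k] N)) →ₗ[k] ((Fin (n + 1) → c) →₀ (M ⊗[k] N)) :=
  Finsupp.lsum k fun v =>
    ((-1 : k) ^ (n + 1)) •
      (Finsupp.lsingle (Fin.snoc v (⟨h, hh⟩ : c))).comp (LinearMap.lTensor M σ)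

/-- The operator `T(m⊗g₁⊗⋯⊗gₙ⊗ω) = m·[h] ⊗ h⁻¹g₁h⊗⋯⊗h⁻¹gₙh ⊗ [h]⁻¹ω`. -/
noncomputable def twoSidedT (h : G) (σ : Module.End k N) (n : ℕ) :
    ((Fin n → c) →₀ (M ⊗[k] N)) →ₗ[k] ((Fin n → c) →₀ (M ⊗[k] N)) :=
  Finsupp.lsum k fun v =>
    (Finsupp.lsingle (fun j : Fin n =>
        (⟨h⁻¹ * (v j : G) * h, hc _ (v j).2 h⟩ : c))).comp
      ((LinearMap.rTensor N (ρM h)).comp (LinearMap.lTensor M σ))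

end TwoSided

section Helpers

set_option linter.unusedSectionVars false

variable {k : Type*} [Field k] {G : Type*} [Group G] {c : Set G}
  (hc : ∀ g ∈ c, ∀ x : G, x⁻¹ * g * x ∈ c)
  {M : Type*} [AddCommGroup M] [Module k M]
  {N : Type*} [AddCommGroup N] [Module k N]
  (ρM : G → Module.End k M) (ρN : G → Module.End k N)

/-- The simultaneous conjugate `(g⁻¹v₁g, …, g⁻¹vₙg)` of a tuple. -/
def conjTuple (g : G) {n : ℕ} (v : Fin n → c) : Fin n → c :=
  fun j => ⟨g⁻¹ * (v j : G) * g, hc _ (v j).2 g⟩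

/-- The tuple left after moving the `i`-th entry to the left: earlier entries are conjugated by it. -/
def leftFace {n : ℕ} (v : Fin (n + 1) → c) (i : Fin (n + 1)) : Fin n → c :=
  fun j =>
    if ((i.succAbove j : Fin (n + 1)) : ℕ) < (i : ℕ) then
      (⟨((v i : G))⁻¹ * (v (i.succAbove j) : G) * (v i : G),
        hc _ (v (i.succAbove j)).2 _⟩ : c)
    else v (i.succAbove j)

/-- The product of the entries of a tuple after the `i`-th. -/
def tailProd {n : ℕ} (v : Fin n → c) (i : Fin n) : G :=
  ((List.ofFn fun j => (v j : G)).drop ((i : ℕ) + 1)).prod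

/-- The differential `d = d_l + d_r`. -/
noncomputable def diff (n : ℕ) :
    ((Fin (n + 1) → c) →₀ (M ⊗[k] N)) →ₗ[k] ((Fin n → c) →₀ (M ⊗[k] N)) :=
  twoSidedDl k G c hc M N ρM n + twoSidedDr k G c M N ρN n

lemma diff_single (n : ℕ) (v : Fin (n + 1) → c) (x : M ⊗[k] N) :
    diff hc ρM ρN n (Finsupp.single v x) =
      ∑ i : Fin (n + 1), ((-1 : k) ^ ((i : ℕ) + 1)) •
        (Finsupp.single (leftFace hc v i) (LinearMap.rTensor N (ρM (v i)) x) +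
          Finsupp.single (fun j => v (i.succAbove j))
            (LinearMap.lTensor M (ρN ((tailProd v i)⁻¹ * (v i : G) * tailProd v i)) x)) := by
  simp only [diff, twoSidedDl, twoSidedDr, LinearMap.add_apply, Finsupp.lsum_single,
    LinearMap.sum_apply, LinearMap.smul_apply, LinearMap.comp_apply, Finsupp.lsingle_apply,
    smul_add, Finset.sum_add_distrib]
  rfl

/-- Appending `g` at the end of each tuple. -/
noncomputable def snocMap (g : c) (n : ℕ) :
    ((Fin n → c) →₀ (M ⊗[k] N)) →ₗ[k] ((Fin (n + 1) → c) →₀ (M ⊗[k] N)) :=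
  Finsupp.lmapDomain _ k fun v => Fin.snoc (α := fun _ => c) v g

/-- An endomorphism of `N` acting on the coefficients. -/
noncomputable def actN (f : Module.End k N) (n : ℕ) :
    ((Fin n → c) →₀ (M ⊗[k] N)) →ₗ[k] ((Fin n → c) →₀ (M ⊗[k] N)) :=
  Finsupp.mapRange.linearMap (LinearMap.lTensor M f)

/-- Conjugating each tuple by `g` while `[g]` acts on `M`. -/
noncomputable def conjM (g : G) (n : ℕ) :
    ((Fin n → c) →₀ (M ⊗[k] N)) →ₗ[k] ((Fin n → c) →₀ (M ⊗[k] N)) :=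
  (Finsupp.lmapDomain _ k (conjTuple hc g)).comp
    (Finsupp.mapRange.linearMap (LinearMap.rTensor N (ρM g)))

/-- The contribution to the differential of a last entry `g`, up to sign. -/
noncomputable def lastFace (g : G) (n : ℕ) :
    ((Fin n → c) →₀ (M ⊗[k] N)) →ₗ[k] ((Fin n → c) →₀ (M ⊗[k] N)) :=
  conjM hc ρM g n + actN (ρN g) n

lemma snocMap_single (g : c) (n : ℕ) (v : Fin n → c) (x : M ⊗[k] N) :
    snocMap g n (Finsupp.single v x) =
      Finsupp.single (Fin.snoc (α := fun _ => c) v g : Fin (n + 1) → c) x := by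
  simp [snocMap]

lemma actN_single (f : Module.End k N) (n : ℕ) (v : Fin n → c) (x : M ⊗[k] N) :
    actN f n (Finsupp.single v x) = Finsupp.single v (LinearMap.lTensor M f x) := by
  simp [actN]

lemma conjM_single (g : G) (n : ℕ) (v : Fin n → c) (x : M ⊗[k] N) :
    conjM hc ρM g n (Finsupp.single v x) =
      Finsupp.single (conjTuple hc g v) (LinearMap.rTensor N (ρM g) x) := by
  simp [conjM]

lemma tailProd_snoc_castSucc {n : ℕ} (v : Fin n → c) (g : c) (i : Fin n) :
    tailProd (Fin.snoc (α := fun _ => c) v g : Fin (n + 1) → c) i.castSucc =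
      tailProd v i * g := by
  unfold tailProd
  rw [List.ofFn_succ']
  simp only [Fin.snoc_castSucc, Fin.snoc_last, List.concat_eq_append, Fin.val_castSucc]
  rw [List.drop_append_of_le_length (by simp)]
  simp

lemma tailProd_last {n : ℕ} (v : Fin (n + 1) → c) : tailProd v (Fin.last n) = 1 := by
  unfold tailProd
  rw [List.drop_of_length_le (by simp), List.prod_nil]

lemma tailProd_conjTuple {n : ℕ} (v : Fin n → c) (g : G) (i : Fin n) :
    tailProd (conjTuple hc g v) i = g⁻¹ * tailProd v i * g := by
  have e : (List.ofFn fun j => ((conjTuple hc g v j : c) : G)) =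
      (List.ofFn fun j => (v j : G)).map (MulAut.conj g⁻¹) := by
    rw [List.map_ofFn]
    congr 1
    funext j
    simp [conjTuple]
  unfold tailProd
  rw [e, ← List.map_drop, List.prod_hom]
  simp

lemma leftFace_snoc_castSucc {n : ℕ} (v : Fin (n + 1) → c) (g : c) (i : Fin (n + 1)) :
    leftFace hc (Fin.snoc (α := fun _ => c) v g : Fin (n + 2) → c) i.castSucc =
      Fin.snoc (α := fun _ => c) (leftFace hc v i) g := by
  funext j
  refine Fin.lastCases ?_ (fun j => ?_) j
  · have : i.castSucc.succAbove (Fin.last n) = Fin.last (n + 1) := by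
      rw [Fin.succAbove_of_le_castSucc _ _ (Fin.castSucc_le_castSucc_iff.mpr (Fin.le_last i)),
        Fin.succ_last]
    have h2 : ¬ (n + 1 < (i : ℕ)) := by omega
    simp [leftFace, this, h2]
  · simp [leftFace, Fin.castSucc_succAbove_castSucc]

lemma succAbove_snoc_castSucc {n : ℕ} (v : Fin (n + 1) → c) (g : c) (i : Fin (n + 1)) :
    (fun j => (Fin.snoc (α := fun _ => c) v g : Fin (n + 2) → c) (i.castSucc.succAbove j)) =
      Fin.snoc (α := fun _ => c) (fun j => v (i.succAbove j)) g := by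
  funext j
  refine Fin.lastCases ?_ (fun j => ?_) j
  · have : i.castSucc.succAbove (Fin.last n) = Fin.last (n + 1) := by
      rw [Fin.succAbove_of_le_castSucc _ _ (Fin.castSucc_le_castSucc_iff.mpr (Fin.le_last i)),
        Fin.succ_last]
    simp [this]
  · simp [Fin.castSucc_succAbove_castSucc]

lemma leftFace_snoc_last {n : ℕ} (v : Fin n → c) (g : c) :
    leftFace hc (Fin.snoc (α := fun _ => c) v g : Fin (n + 1) → c) (Fin.last n) =
      conjTuple hc g v := by
  funext j
  simp [leftFace, conjTuple]

lemma leftFace_conjTuple {n : ℕ} (v : Fin (n + 1) → c) (g : G) (i : Fin (n + 1)) :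
    leftFace hc (conjTuple hc g v) i = conjTuple hc g (leftFace hc v i) := by
  funext j
  apply Subtype.ext
  simp only [leftFace, conjTuple]
  split_ifs
  · simp only []
    group
  · rfl

/-- The terms for `i.castSucc` give the first summand, and the term for the last index the second. -/
lemma diff_snocMap (g : c) (n : ℕ) :
    (diff hc ρM ρN (n + 1)).comp (snocMap g (n + 1)) =
      (snocMap g n).comp (diff hc ρM (fun x => ρN ((g : G)⁻¹ * x * g)) n) +
        ((-1 : k) ^ n) • lastFace hc ρM ρN (g : G) (n + 1) := by
  refine Finsupp.lhom_ext fun v x => ?_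
  simp only [LinearMap.comp_apply, LinearMap.add_apply, LinearMap.smul_apply, lastFace,
    snocMap_single, diff_single, actN_single, conjM_single]
  rw [Fin.sum_univ_castSucc, map_sum]
  congr 1
  · refine Finset.sum_congr rfl fun i _ => ?_
    simp only [map_smul, map_add, snocMap_single, leftFace_snoc_castSucc, Fin.snoc_castSucc,
      succAbove_snoc_castSucc, tailProd_snoc_castSucc, Fin.val_castSucc, mul_inv_rev, mul_assoc]
  · rw [leftFace_snoc_last, tailProd_last]
    simp [pow_succ]

lemma diff_zero_snocMap (g : c) :
    (diff hc ρM ρN 0).comp (snocMap g 0) = (-1 : k) • lastFace hc ρM ρN (g : G) 0 := by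
  refine Finsupp.lhom_ext fun v x => ?_
  simp only [LinearMap.comp_apply, LinearMap.add_apply, LinearMap.smul_apply, lastFace,
    snocMap_single, diff_single, actN_single, conjM_single]
  rw [Fin.sum_univ_castSucc, Fin.sum_univ_zero, zero_add, leftFace_snoc_last, tailProd_last,
    Fin.snoc_last]
  have e : (fun j => (Fin.snoc (α := fun _ => c) v g : Fin (0 + 1) → c)
      ((Fin.last 0).succAbove j)) = v := Subsingleton.elim _ _
  rw [e]
  simp only [Fin.val_last, zero_add, pow_one, inv_one, one_mul, mul_one]

/-- A map intertwining two actions on `N` intertwines the two differentials. -/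
lemma diff_actN (ρN' : G → Module.End k N) (f : Module.End k N)
    (hf : ∀ x, f * ρN x = ρN' x * f) (n : ℕ) :
    (diff hc ρM ρN' n).comp (actN f (n + 1)) = (actN f n).comp (diff hc ρM ρN n) := by
  refine Finsupp.lhom_ext fun v x => ?_
  simp only [LinearMap.comp_apply, actN_single, diff_single, map_sum, map_smul, map_add]
  refine Finset.sum_congr rfl fun i _ => ?_
  congr 3
  · rw [← LinearMap.comp_apply, ← LinearMap.comp_apply, LinearMap.rTensor_comp_lTensor,
      LinearMap.lTensor_comp_rTensor]
  · rw [← LinearMap.lTensor_comp_apply, ← LinearMap.lTensor_comp_apply]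
    exact congrArg (fun q => LinearMap.lTensor M q x) (hf _).symm

/-- Conjugation by `g`, with `[g]` acting on `M`, intertwines the twisted differential with `d`. -/
lemma diff_conjM (hρM : ∀ x y : G, ρM y * ρM x = ρM (y⁻¹ * x * y) * ρM y) (g : G) (n : ℕ) :
    (diff hc ρM ρN n).comp (conjM hc ρM g (n + 1)) =
      (conjM hc ρM g n).comp (diff hc ρM (fun x => ρN (g⁻¹ * x * g)) n) := by
  refine Finsupp.lhom_ext fun v x => ?_
  simp only [LinearMap.comp_apply, conjM_single, diff_single, map_sum, map_smul, map_add]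
  refine Finset.sum_congr rfl fun i _ => ?_
  congr 2
  · rw [leftFace_conjTuple, ← LinearMap.rTensor_comp_apply, ← LinearMap.rTensor_comp_apply]
    exact congrArg (fun q => Finsupp.single _ (LinearMap.rTensor N q x)) (hρM _ _).symm
  · rw [tailProd_conjTuple, ← LinearMap.comp_apply, ← LinearMap.comp_apply,
      LinearMap.rTensor_comp_lTensor, LinearMap.lTensor_comp_rTensor]
    have e : (g⁻¹ * tailProd v i * g)⁻¹ * ((conjTuple hc g v i : c) : G) *
        (g⁻¹ * tailProd v i * g) =
        g⁻¹ * ((tailProd v i)⁻¹ * (v i : G) * tailProd v i) * g := by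
      simp only [conjTuple]
      group
    rw [e]
    rfl

/-- `lastFace g` intertwines the differential twisted by `g` with `d`. -/
lemma diff_lastFace (hρM : ∀ x y : G, ρM y * ρM x = ρM (y⁻¹ * x * y) * ρM y)
    (hρN : ∀ x y : G, ρN x * ρN y = ρN y * ρN (y⁻¹ * x * y)) (g : G) (n : ℕ) :
    (diff hc ρM ρN n).comp (lastFace hc ρM ρN g (n + 1)) =
      (lastFace hc ρM ρN g n).comp (diff hc ρM (fun x => ρN (g⁻¹ * x * g)) n) := by
  rw [lastFace, lastFace, LinearMap.comp_add, LinearMap.add_comp, diff_conjM hc ρM ρN hρM,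
    diff_actN hc ρM (fun x => ρN (g⁻¹ * x * g)) ρN (ρN g) fun x => (hρN x g).symm]

/-- Maps out of a positive-length term are determined on the tuples ending in `g`, for each `g`. -/
lemma ext_snocMap {n : ℕ} {W : Type*} [AddCommGroup W] [Module k W]
    {f f' : ((Fin (n + 1) → c) →₀ (M ⊗[k] N)) →ₗ[k] W}
    (hf : ∀ g : c, f.comp (snocMap g n) = f'.comp (snocMap g n)) : f = f' := by
  refine Finsupp.lhom_ext fun v x => ?_
  have := LinearMap.congr_fun (hf (v (Fin.last n))) (Finsupp.single (Fin.init v) x)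
  simpa only [LinearMap.comp_apply, snocMap_single, Fin.snoc_init_self] using this

/-- The induction on the length has to range over all actions on `N`, as each step twists it. -/
lemma diff_comp_diff (hρM : ∀ x y : G, ρM y * ρM x = ρM (y⁻¹ * x * y) * ρM y) (n : ℕ) :
    ∀ ρN : G → Module.End k N, (∀ x y : G, ρN x * ρN y = ρN y * ρN (y⁻¹ * x * y)) →
      (diff hc ρM ρN n).comp (diff hc ρM ρN (n + 1)) = 0 := by
  induction n with
  | zero =>
    intro ρN hρN
    refine ext_snocMap fun g => ?_
    rw [LinearMap.comp_assoc, diff_snocMap, LinearMap.comp_add, ← LinearMap.comp_assoc,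
      diff_zero_snocMap, LinearMap.comp_smul, diff_lastFace hc ρM ρN hρM hρN,
      LinearMap.smul_comp, pow_zero, ← add_smul, neg_add_cancel, zero_smul, LinearMap.zero_comp]
  | succ n ih =>
    intro ρN hρN
    refine ext_snocMap fun g => ?_
    rw [LinearMap.comp_assoc, diff_snocMap, LinearMap.comp_add, ← LinearMap.comp_assoc,
      diff_snocMap, LinearMap.comp_smul, diff_lastFace hc ρM ρN hρM hρN, LinearMap.add_comp,
      LinearMap.comp_assoc, ih _ ?_]
    · rw [LinearMap.comp_zero, zero_add, LinearMap.smul_comp, ← add_smul, pow_succ, mul_neg_one,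
        add_neg_cancel, zero_smul, LinearMap.zero_comp]
    · intro x y
      rw [hρN]
      congr 2
      group

lemma twoSidedS_eq (h : G) (hh : h ∈ c) (σ : Module.End k N) (n : ℕ) :
    twoSidedS k G c M N h hh σ n =
      ((-1 : k) ^ (n + 1)) • (snocMap (⟨h, hh⟩ : c) n).comp (actN σ n) := by
  refine Finsupp.lhom_ext fun v x => ?_
  simp only [twoSidedS, Finsupp.lsum_single, LinearMap.smul_apply, LinearMap.comp_apply,
    actN_single, snocMap_single, Finsupp.lsingle_apply]

lemma twoSidedT_eq_zero (h : G) (σ : Module.End k N) (hM : ρM h = 0) (n : ℕ) :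
    twoSidedT k G c hc M N ρM h σ n = 0 := by
  refine Finsupp.lhom_ext fun v x => ?_
  simp [twoSidedT, hM]

/-- As `[h]` kills `M`, only the `N`-part of `lastFace h` survives, and `σ` cancels it. -/
lemma lastFace_comp_actN (h : G) (σ : Module.End k N) (hσ₁ : ρN h * σ = 1) (hM : ρM h = 0)
    (n : ℕ) :
    (lastFace hc ρM ρN h n).comp (actN σ n) =
      (LinearMap.id : ((Fin n → c) →₀ (M ⊗[k] N)) →ₗ[k] _) := by
  refine Finsupp.lhom_ext fun v x => ?_
  simp only [lastFace, LinearMap.comp_apply, LinearMap.add_apply, actN_single, conjM_single, hM,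
    LinearMap.rTensor_zero, LinearMap.zero_apply, Finsupp.single_zero, zero_add,
    LinearMap.id_apply]
  rw [← LinearMap.lTensor_comp_apply]
  have : ρN h ∘ₗ σ = LinearMap.id := hσ₁
  rw [this, LinearMap.lTensor_id, LinearMap.id_apply]

lemma homotopy_succ (hρN : ∀ x y : G, ρN x * ρN y = ρN y * ρN (y⁻¹ * x * y))
    (h : G) (hh : h ∈ c) (σ : Module.End k N)
    (hσ₁ : ρN h * σ = 1) (hσ₂ : σ * ρN h = 1) (hM : ρM h = 0) (n : ℕ) :
    (twoSidedS k G c M N h hh σ n).comp (diff hc ρM ρN n) +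
      (diff hc ρM ρN (n + 1)).comp (twoSidedS k G c M N h hh σ (n + 1)) = LinearMap.id := by
  -- the braid relation `[x][h] = [h][h⁻¹xh]`, multiplied by `σ` on both sides
  have hσ : ∀ x, σ * ρN x = ρN (h⁻¹ * x * h) * σ := fun x => by
    calc σ * ρN x = σ * (ρN x * ρN h) * σ := by
          rw [mul_assoc, mul_assoc, hσ₁, mul_one]
      _ = ρN (h⁻¹ * x * h) * σ := by rw [hρN, ← mul_assoc, hσ₂, one_mul]
  rw [twoSidedS_eq, twoSidedS_eq, LinearMap.comp_smul, ← LinearMap.comp_assoc, diff_snocMap,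
    LinearMap.add_comp, LinearMap.smul_comp, LinearMap.smul_comp, LinearMap.comp_assoc,
    LinearMap.comp_assoc, diff_actN hc ρM ρN _ σ hσ, lastFace_comp_actN hc ρM ρN h σ hσ₁ hM,
    smul_add, smul_smul, ← add_assoc, ← add_smul]
  have e1 : (-1 : k) ^ (n + 1) + (-1) ^ (n + 1 + 1) = 0 := by ring
  have e2 : (-1 : k) ^ (n + 1 + 1) * (-1) ^ n = 1 := by
    rw [← pow_add, show n + 1 + 1 + n = 2 * (n + 1) by ring, pow_mul]
    simp
  rw [e1, e2, zero_smul, zero_add, one_smul]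

lemma homotopy_zero (h : G) (hh : h ∈ c) (σ : Module.End k N)
    (hσ₁ : ρN h * σ = 1) (hM : ρM h = 0) :
    (diff hc ρM ρN 0).comp (twoSidedS k G c M N h hh σ 0) = LinearMap.id := by
  rw [twoSidedS_eq, LinearMap.comp_smul, ← LinearMap.comp_assoc, diff_zero_snocMap,
    LinearMap.smul_comp, lastFace_comp_actN hc ρM ρN h σ hσ₁ hM, smul_smul, zero_add, pow_one,
    neg_mul_neg, one_mul, one_smul]

end Helpers

/-- Suppose `M` is a right module and `N` a left module over the component ring of
Hurwitz spaces (encoded by operator families `ρM`, `ρN` satisfying the Hurwitz braid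
relations), and suppose `[h]` acts invertibly on `N` (with inverse `σ`) and by `0` on
`M` for some `h ∈ c`. Then `S` is a chain homotopy between the identity and the
operator `T`, `T = 0`, and consequently the two-sided complex `K(M, A, N)` is exact. -/
theorem stmt13 (k : Type*) [Field k] (G : Type*) [Group G] (c : Set G)
    (hc : ∀ g ∈ c, ∀ x : G, x⁻¹ * g * x ∈ c)
    (M : Type*) [AddCommGroup M] [Module k M]
    (N : Type*) [AddCommGroup N] [Module k N]
    (ρM : G → Module.End k M) (ρN : G → Module.End k N)
    (hρM : ∀ x y : G, ρM y * ρM x = ρM (y⁻¹ * x * y) * ρM y)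
    (hρN : ∀ x y : G, ρN x * ρN y = ρN y * ρN (y⁻¹ * x * y))
    (h : G) (hh : h ∈ c) (σ : Module.End k N)
    (hσ₁ : ρN h * σ = 1) (hσ₂ : σ * ρN h = 1) (hM : ρM h = 0) :
    (∀ n : ℕ,
        (twoSidedS k G c M N h hh σ n).comp
            (twoSidedDl k G c hc M N ρM n + twoSidedDr k G c M N ρN n) +
          (twoSidedDl k G c hc M N ρM (n + 1) + twoSidedDr k G c M N ρN (n + 1)).comp
            (twoSidedS k G c M N h hh σ (n + 1)) =
        LinearMap.id - twoSidedT k G c hc M N ρM h σ (n + 1)) ∧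
    ((twoSidedDl k G c hc M N ρM 0 + twoSidedDr k G c M N ρN 0).comp
        (twoSidedS k G c M N h hh σ 0) =
      LinearMap.id - twoSidedT k G c hc M N ρM h σ 0) ∧
    (∀ n : ℕ, twoSidedT k G c hc M N ρM h σ n = 0) ∧
    (∀ n : ℕ,
        LinearMap.ker (twoSidedDl k G c hc M N ρM n + twoSidedDr k G c M N ρN n) =
          LinearMap.range
            (twoSidedDl k G c hc M N ρM (n + 1) + twoSidedDr k G c M N ρN (n + 1))) ∧
    LinearMap.range (twoSidedDl k G c hc M N ρM 0 + twoSidedDr k G c M N ρN 0) = ⊤ := by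
  have hs := homotopy_succ hc ρM ρN hρN h hh σ hσ₁ hσ₂ hM
  have h0 := homotopy_zero hc ρM ρN h hh σ hσ₁ hM
  have hT := twoSidedT_eq_zero hc ρM h σ hM
  refine ⟨fun n => ?_, ?_, hT, fun n => ?_, ?_⟩
  · rw [hT]
    exact (hs n).trans (LinearMap.ext fun z => (sub_zero z).symm)
  · rw [hT]
    exact h0.trans (LinearMap.ext fun z => (sub_zero z).symm)
  · change LinearMap.ker (diff hc ρM ρN n) = LinearMap.range (diff hc ρM ρN (n + 1))
    apply le_antisymm
    · intro z hz
      have := LinearMap.congr_fun (hs n) z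
      rw [LinearMap.add_apply, LinearMap.comp_apply, LinearMap.mem_ker.mp hz, map_zero,
        zero_add] at this
      exact ⟨_, this⟩
    · exact LinearMap.range_le_ker_iff.mpr (diff_comp_diff hc ρM hρM n ρN hρN)
  · rw [LinearMap.range_eq_top]
    exact fun z => ⟨_, LinearMap.congr_fun h0 z⟩
end

section
/- Let G be a group, c a conjugacy class such that the centralizer of each g ∈ c in c is {g}. Fix g ∈ c. Let Tₙ be the span of tuples (g₁,…,gₙ) ∈ cⁿ with some gᵢ ≠ g, with the two-sided differential d = d_l + d_r of the complex C (with M = k[g], N = k[g,g⁻¹]). Define σₙ(x₁,…,x_s, h, g,…,g) = (-1)ⁿ (x₁,…,x_s, hgh⁻¹, h, g,…,g), where h ≠ g is the rightmost entry not equal to g and t copies of g follow it. Then σ_{n-1}dₙ + d_{n+1}σₙ acts on the basis element (x₁,…,x_s,h,g,…,g) by multiplication by (-1)^{n+s+1}; in particular T is exact. -/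
/-!
The differential and the homotopy are computed by recursion on the first entry of a tuple. With
`C_a` denoting "prepend `a`" and `K_a` the projection onto the tuples whose product conjugates
`a` to `g`,

* `d_l C_a = -[a = g] - C_{g⁻¹ag} d_l` (`gDl_succ_C`),
* `d_r C_a = -K_a - C_a d_r` (`gDr_succ_C`),
* `σ C_a = -C_a σ` on the span of the tuples with an entry other than `g` (`gSigma_C`).

Deleting an entry by `d_l` removes a factor `g` on the left of the product of the tuple, deleting
one by `d_r` removes it on the right, and `σ` adds one on the right. Hence `K_a` commutes with
`d_r` and `σ`, while `K_{g⁻¹ag} d_l = d_l K_a`. With these relations, induction on the length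
shows `d² = 0` (`d_d`), and shows that the first-entry terms of `σd` and `dσ` cancel, so that
`σd_l + d_lσ` and `σd_r + d_rσ` on `C_a w` are the images under `C_{g⁻¹ag}` and `C_a` of the same
operators on `w`. This reduces the homotopy formula to tuples `(h, g, …, g)` with `h ≠ g`
(`keyL`, `keyR`). There the main term comes from `d_r` deleting the inserted entry `hgh⁻¹`, which
`d_l` cannot delete because `hgh⁻¹ ≠ g`. The deletions of trailing copies of `g` need not cancel,
but they only produce tuples whose last entry other than `g` is further to the right.

So `σd + dσ` is triangular, with entries `±1` on the diagonal, for the filtration `gF` by the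
position of the last entry other than `g`. This filtration is finite in each degree, and
subtracting the boundary of a signed `σz` moves a cycle `z` one step down; here `d² = 0` ensures
that the difference is still a cycle. Exactness follows by induction (`exact_aux`).
-/

section GComplex

variable (k : Type*) [Field k] (G : Type*) [Group G] [DecidableEq G] (g : G)

/-- The rightward differential of (the total complex of) the two-sided K-complex with
`M = k[g]`, `N = k[g, g⁻¹]`, acting on the span of tuples:
`d_r(g₁,…,gₙ) = Σᵢ δ_{g, gₙ⁻¹⋯g_{i+1}⁻¹gᵢg_{i+1}⋯gₙ}(±1)(g₁,…,ĝᵢ,…,gₙ)`. -/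
noncomputable def gDr (n : ℕ) :
    ((Fin (n + 1) → G) →₀ k) →ₗ[k] ((Fin n → G) →₀ k) :=
  Finsupp.lsum k fun v =>
    ∑ i : Fin (n + 1),
      (if ((List.ofFn v).drop ((i : ℕ) + 1)).prod⁻¹ * v i *
            ((List.ofFn v).drop ((i : ℕ) + 1)).prod = g then
          ((-1 : k) ^ ((i : ℕ) + 1)) else 0) •
        Finsupp.lsingle (fun j : Fin n => v (i.succAbove j))

/-- The leftward differential:
`d_l(g₁,…,gₙ) = Σᵢ δ_{g,gᵢ}(±1)(gᵢ⁻¹g₁gᵢ,…,gᵢ⁻¹g_{i-1}gᵢ, g_{i+1},…,gₙ)`. -/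
noncomputable def gDl (n : ℕ) :
    ((Fin (n + 1) → G) →₀ k) →ₗ[k] ((Fin n → G) →₀ k) :=
  Finsupp.lsum k fun v =>
    ∑ i : Fin (n + 1),
      (if v i = g then ((-1 : k) ^ ((i : ℕ) + 1)) else 0) •
        Finsupp.lsingle (fun j : Fin n =>
          if ((i.succAbove j : Fin (n + 1)) : ℕ) < (i : ℕ) then
            (v i)⁻¹ * v (i.succAbove j) * v i
          else v (i.succAbove j))

/-- The chain homotopy `σₙ`: on a tuple whose rightmost entry different from `g` is in
position `p` (so the tuple has the form `(x₁,…,x_s, h, g,…,g)` with `h ≠ g` in position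
`p = s`), insert `h g h⁻¹` just before `h`, with sign `(-1)ⁿ`; on the tuple all of whose
entries equal `g`, it is zero. -/
noncomputable def gSigma (n : ℕ) :
    ((Fin n → G) →₀ k) →ₗ[k] ((Fin (n + 1) → G) →₀ k) :=
  Finsupp.lsum k fun v =>
    if hx : ∃ i, v i ≠ g then
      letI p := (Finset.univ.filter fun i => v i ≠ g).max'
        (by obtain ⟨i, hi⟩ := hx; exact ⟨i, by simpa using hi⟩)
      ((-1 : k) ^ n) •
        Finsupp.lsingle (Fin.insertNth (Fin.castSucc p) (v p * g * (v p)⁻¹) v)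
    else 0

end GComplex

section Helpers

set_option linter.unusedSectionVars false

variable (k : Type*) [Field k] {G : Type*} [Group G] [DecidableEq G] (g : G)

/-- The basis element of the span of `n`-tuples given by the tuple `v`. -/
noncomputable abbrev gE {n : ℕ} (v : Fin n → G) : (Fin n → G) →₀ k := Finsupp.single v 1

/-- Prepending the entry `a` to every tuple, extended linearly. -/
noncomputable abbrev gC {n : ℕ} (a : G) :
    ((Fin n → G) →₀ k) →ₗ[k] ((Fin (n + 1) → G) →₀ k) :=
  Finsupp.lmapDomain k k fun v => (Fin.cons a v : Fin (n + 1) → G)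

/-- The product `g₁⋯gₙ` of the entries of a tuple. -/
def gP {n : ℕ} (v : Fin n → G) : G := (List.ofFn v).prod

/-- The projection onto the span of the tuples `w` whose product conjugates `a` to `g`. Up to
sign, it gives the term of `d_r` that deletes an entry `a` placed in front of the tuple. -/
noncomputable def gK {n : ℕ} (a : G) : ((Fin n → G) →₀ k) →ₗ[k] ((Fin n → G) →₀ k) :=
  Finsupp.lsum k fun w =>
    (if (gP w)⁻¹ * a * gP w = g then (1 : k) else 0) • Finsupp.lsingle w

variable {k}

lemma gC_e {n : ℕ} (a : G) (v : Fin n → G) :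
    gC k a (gE k v) = gE k (Fin.cons a v : Fin (n + 1) → G) := by
  simp [gC, gE]

lemma gP_cons {n : ℕ} (a : G) (v : Fin n → G) :
    gP (Fin.cons a v : Fin (n + 1) → G) = a * gP v := by
  simp [gP]

lemma gP_const (n : ℕ) : gP (fun _ : Fin n => g) = g ^ n := by
  simp [gP]

lemma gK_e {n : ℕ} (a : G) (w : Fin n → G) :
    gK k g a (gE k w) = if (gP w)⁻¹ * a * gP w = g then gE k w else 0 := by
  simp only [gK, gE, Finsupp.lsum_single]
  split_ifs <;> simp

/-- Two linear maps that agree on a set of tuples agree on its span. -/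
lemma eqOn_supp {M : Type*} [AddCommGroup M] [Module k M] {n : ℕ} {S : Set (Fin n → G)}
    (f f' : ((Fin n → G) →₀ k) →ₗ[k] M) (h : ∀ v ∈ S, f (gE k v) = f' (gE k v))
    {x : (Fin n → G) →₀ k} (hx : x ∈ Finsupp.supported k k S) : f x = f' x := by
  rw [Finsupp.supported_eq_span_single] at hx
  refine LinearMap.eqOn_span (f := f) (g := f') ?_ hx
  rintro _ ⟨v, hv, rfl⟩
  exact h v hv

lemma map_supp {M : Type*} [AddCommGroup M] [Module k M] {n : ℕ} {S : Set (Fin n → G)}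
    (f : ((Fin n → G) →₀ k) →ₗ[k] M) (N : Submodule k M) (h : ∀ v ∈ S, f (gE k v) ∈ N)
    {x : (Fin n → G) →₀ k} (hx : x ∈ Finsupp.supported k k S) : f x ∈ N := by
  rw [Finsupp.supported_eq_span_single] at hx
  have : Submodule.span k ((fun i => Finsupp.single i (1 : k)) '' S) ≤ N.comap f := by
    rw [Submodule.span_le]
    rintro _ ⟨v, hv, rfl⟩
    exact h v hv
  exact this hx

lemma e_mem {n : ℕ} {S : Set (Fin n → G)} {v : Fin n → G} (h : v ∈ S) :
    gE k v ∈ Finsupp.supported k k S :=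
  Finsupp.single_mem_supported k 1 h

lemma e_mem_univ {n : ℕ} (x : (Fin n → G) →₀ k) :
    x ∈ Finsupp.supported k k (Set.univ : Set (Fin n → G)) := by
  simp

lemma ext_e {M : Type*} [AddCommGroup M] [Module k M] {n : ℕ}
    (f f' : ((Fin n → G) →₀ k) →ₗ[k] M) (h : ∀ v, f (gE k v) = f' (gE k v))
    (x : (Fin n → G) →₀ k) : f x = f' x :=
  eqOn_supp f f' (fun v _ => h v) (e_mem_univ x)

lemma gC_mem {n : ℕ} {a : G} {S : Set (Fin n → G)} {S' : Set (Fin (n + 1) → G)}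
    (h : ∀ w ∈ S, (Fin.cons a w : Fin (n + 1) → G) ∈ S') {x : (Fin n → G) →₀ k}
    (hx : x ∈ Finsupp.supported k k S) : gC k a x ∈ Finsupp.supported k k S' :=
  map_supp (gC k a) _ (fun w hw => by rw [gC_e]; exact e_mem (h w hw)) hx

lemma gK_supp {n : ℕ} {a : G} {S : Set (Fin n → G)} {Q : Prop} [Decidable Q]
    (h : ∀ w ∈ S, ((gP w)⁻¹ * a * gP w = g ↔ Q)) {x : (Fin n → G) →₀ k}
    (hx : x ∈ Finsupp.supported k k S) : gK k g a x = if Q then x else 0 := by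
  have := eqOn_supp (gK k g a) ((if Q then (1 : k) else 0) • LinearMap.id)
    (fun w hw => by rw [gK_e]; by_cases hQ : Q <;> simp [h w hw, hQ]) hx
  rw [this]; split_ifs <;> simp

/-! ### Recursion on the first entry -/

lemma gDl_zero_C (a : G) (x : (Fin 0 → G) →₀ k) :
    gDl k G g 0 (gC k a x) = -(if a = g then x else 0) := by
  have := ext_e ((gDl k G g 0).comp (gC k a)) (-(if a = g then (1 : k) else 0) • LinearMap.id)
    (fun v => by
      rw [LinearMap.comp_apply, gC_e]
      have h : (fun j : Fin 0 => v j) = v := rfl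
      split_ifs with ha <;> simp [gDl, ha, Subsingleton.elim _ v]) x
  rw [LinearMap.comp_apply] at this
  rw [this]; simp

lemma gDl_succ_C {n : ℕ} (a : G) (x : (Fin (n + 1) → G) →₀ k) :
    gDl k G g (n + 1) (gC k a x) =
      -(if a = g then x else 0) - gC k (g⁻¹ * a * g) (gDl k G g n x) := by
  have := ext_e ((gDl k G g (n + 1)).comp (gC k a))
    (-(if a = g then (1 : k) else 0) • LinearMap.id -
      (gC k (g⁻¹ * a * g)).comp (gDl k G g n))
    (fun v => by
      rw [LinearMap.comp_apply, gC_e, LinearMap.sub_apply, LinearMap.comp_apply, sub_eq_add_neg]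
      simp only [gDl, gE, Finsupp.lsum_single, LinearMap.sum_apply]
      rw [Fin.sum_univ_succ, map_sum, ← Finset.sum_neg_distrib]
      congr 1
      · by_cases ha : a = g <;> simp [ha]
      · refine Finset.sum_congr rfl fun i _ => ?_
        by_cases hi : v i = g
        · simp only [Fin.cons_succ, hi, if_true, LinearMap.smul_apply, Finsupp.lsingle_apply,
            map_smul]
          rw [gC_e, ← neg_smul]
          congr 1
          · simp [pow_succ]
          · congr 1
            funext j
            refine Fin.cases ?_ (fun j => ?_) j
            · simp
            · simp
        · simp [hi]) x
  rw [LinearMap.comp_apply] at this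
  rw [this]; simp

lemma gDr_zero_C (a : G) (x : (Fin 0 → G) →₀ k) :
    gDr k G g 0 (gC k a x) = -gK k g a x := by
  have := ext_e ((gDr k G g 0).comp (gC k a)) (-gK k g a)
    (fun v => by
      rw [LinearMap.comp_apply, gC_e, LinearMap.neg_apply, gK_e]
      split_ifs with ha <;> simp [gP] at ha <;> simp [gDr, ha, Subsingleton.elim _ v]) x
  exact this

lemma gDr_succ_C {n : ℕ} (a : G) (x : (Fin (n + 1) → G) →₀ k) :
    gDr k G g (n + 1) (gC k a x) = -gK k g a x - gC k a (gDr k G g n x) := by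
  have := ext_e ((gDr k G g (n + 1)).comp (gC k a))
    (-gK k g a - (gC k a).comp (gDr k G g n))
    (fun v => by
      rw [LinearMap.comp_apply, gC_e, LinearMap.sub_apply, LinearMap.comp_apply, sub_eq_add_neg,
        LinearMap.neg_apply, gK_e]
      simp only [gDr, gE, Finsupp.lsum_single, LinearMap.sum_apply]
      rw [Fin.sum_univ_succ, map_sum, ← Finset.sum_neg_distrib]
      congr 1
      · have h : ((List.ofFn (Fin.cons a v : Fin (n + 2) → G)).drop
            (((0 : Fin (n + 2)) : ℕ) + 1)).prod = gP v := by
          simp [gP, List.ofFn_succ]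
        rw [h]
        simp only [Fin.cons_zero]
        split_ifs with ha <;> simp
      · refine Finset.sum_congr rfl fun i _ => ?_
        have h : (List.ofFn (Fin.cons a v : Fin (n + 2) → G)).drop ((i.succ : ℕ) + 1) =
            (List.ofFn v).drop ((i : ℕ) + 1) := by
          rw [List.ofFn_cons, Fin.val_succ, List.drop_succ_cons]
        rw [h]
        simp only [Fin.cons_succ]
        split_ifs with hi
        · simp only [LinearMap.smul_apply, Finsupp.lsingle_apply,
            map_smul]
          rw [gC_e, ← neg_smul]
          congr 1
          · simp [pow_succ]
          · congr 1
            funext j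
            refine Fin.cases ?_ (fun j => ?_) j
            · simp
            · simp
        · simp) x
  rw [LinearMap.comp_apply] at this
  rw [this]; simp

/-- The defining formula for `σ`, with the position of the rightmost entry other than `g`
given explicitly. -/
lemma gSigma_last {n : ℕ} (v : Fin n → G) (p : Fin n) (hp : v p ≠ g) (hl : ∀ j, p < j → v j = g) :
    gSigma k G g n (gE k v) =
      (-1 : k) ^ n • gE k (Fin.insertNth p.castSucc (v p * g * (v p)⁻¹) v : Fin (n + 1) → G) := by
  have hx : ∃ i, v i ≠ g := ⟨p, hp⟩
  have hm : ∀ hne, (Finset.univ.filter fun i => v i ≠ g).max' hne = p := by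
    intro hne
    apply le_antisymm
    · refine Finset.max'_le _ _ _ fun j hj => ?_
      by_contra hlt
      exact (Finset.mem_filter.1 hj).2 (hl j (not_le.1 hlt))
    · exact Finset.le_max' _ _ (by simp [hp])
  simp only [gSigma, gE, Finsupp.lsum_single, dif_pos hx, hm]
  simp

lemma exists_last {n : ℕ} (v : Fin n → G) (h : ∃ i, v i ≠ g) :
    ∃ p, v p ≠ g ∧ ∀ j, p < j → v j = g := by
  obtain ⟨i, hi⟩ := h
  have hne : (Finset.univ.filter fun i => v i ≠ g).Nonempty := ⟨i, by simpa using hi⟩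
  refine ⟨_, (Finset.mem_filter.1 (Finset.max'_mem _ hne)).2, fun j hj => ?_⟩
  by_contra hg
  exact absurd (Finset.le_max' _ j (by simpa using hg)) (not_le.2 hj)

lemma gSigma_const (n : ℕ) : gSigma k G g n (gE k fun _ => g) = 0 := by
  simp [gSigma, gE]

lemma gSigma_cons_const (n : ℕ) (a : G) (ha : a ≠ g) :
    gSigma k G g (n + 1) (gC k a (gE k fun _ : Fin n => g)) =
      (-1 : k) ^ (n + 1) • gC k (a * g * a⁻¹) (gC k a (gE k fun _ : Fin n => g)) := by
  simp only [gC_e]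
  rw [gSigma_last g _ 0 (by simpa using ha)]
  · simp
  · intro j
    refine Fin.cases (by simp) (fun j _ => by simp) j

lemma gSigma_C {n : ℕ} (a : G) {x : (Fin n → G) →₀ k}
    (hx : x ∈ Finsupp.supported k k {w : Fin n → G | ∃ i, w i ≠ g}) :
    gSigma k G g (n + 1) (gC k a x) = -gC k a (gSigma k G g n x) := by
  refine eqOn_supp ((gSigma k G g (n + 1)).comp (gC k a)) (-(gC k a).comp (gSigma k G g n))
    (fun w hw => ?_) hx
  obtain ⟨p, hp, hl⟩ := exists_last g w hw
  rw [LinearMap.comp_apply, gC_e, LinearMap.neg_apply, LinearMap.comp_apply,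
    gSigma_last g w p hp hl, gSigma_last g _ p.succ (by simpa using hp), map_smul, gC_e,
    ← neg_smul]
  · congr 1
    · simp [pow_succ]
    · congr 1
      simp
  · intro j
    refine Fin.cases (by simp) (fun j hj => ?_) j
    simpa using hl j (by simpa using hj)

lemma exists_cons {n : ℕ} (v : Fin (n + 1) → G) :
    ∃ (a : G) (w : Fin n → G), v = Fin.cons a w :=
  ⟨v 0, Fin.tail v, (Fin.cons_self_tail v).symm⟩

lemma const_cons (n : ℕ) :
    (fun _ : Fin (n + 1) => g) = (Fin.cons g (fun _ : Fin n => g) : Fin (n + 1) → G) := by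
  funext j
  refine Fin.cases (by simp) (fun j => by simp) j

lemma eq_const {n : ℕ} {v : Fin n → G} (h : ¬ ∃ i, v i ≠ g) : v = fun _ => g := by
  push Not at h
  exact funext h

/-! ### Products of tuples -/

/-- Deleting an entry by `d_l` splits off a factor `g` on the left of the product. -/
lemma gDl_supp : ∀ (n : ℕ) (v : Fin (n + 1) → G),
    gDl k G g n (gE k v) ∈ Finsupp.supported k k {w : Fin n → G | g * gP w = gP v}
  | 0, v => by
    obtain ⟨a, w, rfl⟩ := exists_cons v
    rw [← gC_e, gDl_zero_C]
    refine neg_mem ?_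
    split_ifs with ha
    · exact e_mem (by simp [gP_cons, ha])
    · exact zero_mem _
  | n + 1, v => by
    obtain ⟨a, w, rfl⟩ := exists_cons v
    rw [← gC_e, gDl_succ_C]
    refine sub_mem (neg_mem ?_) (gC_mem (fun u hu => ?_) (gDl_supp n w))
    · split_ifs with ha
      · exact e_mem (by simp [gP_cons, ha])
      · exact zero_mem _
    · simp only [Set.mem_ofPred_eq] at hu
      simp [gP_cons, mul_assoc, hu]

/-- Deleting an entry by `d_r` splits off a factor `g` on the right of the product. -/
lemma gDr_supp : ∀ (n : ℕ) (v : Fin (n + 1) → G),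
    gDr k G g n (gE k v) ∈ Finsupp.supported k k {w : Fin n → G | gP w * g = gP v}
  | 0, v => by
    obtain ⟨a, w, rfl⟩ := exists_cons v
    rw [← gC_e, gDr_zero_C, gK_e]
    refine neg_mem ?_
    split_ifs with ha
    · exact e_mem (by simp [gP_cons, ← ha, mul_assoc])
    · exact zero_mem _
  | n + 1, v => by
    obtain ⟨a, w, rfl⟩ := exists_cons v
    rw [← gC_e, gDr_succ_C, gK_e]
    refine sub_mem (neg_mem ?_) (gC_mem (fun u hu => ?_) (gDr_supp n w))
    · split_ifs with ha
      · refine e_mem ?_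
        rw [Set.mem_ofPred_eq, gP_cons]
        calc gP w * g = gP w * ((gP w)⁻¹ * a * gP w) := by rw [ha]
          _ = a * gP w := by group
      · exact zero_mem _
    · simp only [Set.mem_ofPred_eq] at hu
      simp [gP_cons, mul_assoc, hu]

/-- Inserting `hgh⁻¹` before `h` multiplies the product by `g` on the right, since only copies
of `g` follow `h`. -/
lemma gSigma_supp : ∀ (n : ℕ) (v : Fin n → G),
    gSigma k G g n (gE k v) ∈ Finsupp.supported k k {w : Fin (n + 1) → G | gP w = gP v * g}
  | 0, v => by
    rw [Subsingleton.elim v fun _ => g, gSigma_const]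
    exact zero_mem _
  | n + 1, v => by
    obtain ⟨a, w, rfl⟩ := exists_cons v
    by_cases hw : ∃ i, w i ≠ g
    · rw [← gC_e, gSigma_C g a (e_mem hw)]
      refine neg_mem (gC_mem (fun u hu => ?_) (gSigma_supp n w))
      simp only [Set.mem_ofPred_eq] at hu
      simp [gP_cons, mul_assoc, hu]
    · obtain rfl := eq_const g hw
      by_cases ha : a = g
      · subst ha
        rw [← const_cons, gSigma_const]
        exact zero_mem _
      · rw [← gC_e, gSigma_cons_const g n a ha, gC_e, gC_e]
        refine Submodule.smul_mem _ _ (e_mem ?_)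
        simp only [Set.mem_ofPred_eq, gP_cons, gP_const]
        rw [mul_assoc a (g ^ n), ← pow_succ, pow_succ']
        group

lemma conj_inv_eq_iff (x : G) : g⁻¹ * x * g = g ↔ x = g := by
  constructor
  · intro h
    have : x = g * (g⁻¹ * x * g) * g⁻¹ := by group
    rw [this, h]; group
  · rintro rfl; group

lemma gK_gDl {n : ℕ} (a : G) (x : (Fin (n + 1) → G) →₀ k) :
    gK k g (g⁻¹ * a * g) (gDl k G g n x) = gDl k G g n (gK k g a x) := by
  refine ext_e ((gK k g (g⁻¹ * a * g)).comp (gDl k G g n)) ((gDl k G g n).comp (gK k g a))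
    (fun v => ?_) x
  rw [LinearMap.comp_apply, LinearMap.comp_apply, gK_e,
    gK_supp g (Q := (gP v)⁻¹ * a * gP v = g) (fun w hw => ?_) (gDl_supp g n v)]
  · split_ifs <;> simp
  · simp only [Set.mem_ofPred_eq] at hw
    rw [← hw]
    simp [mul_assoc]

lemma gK_gDr {n : ℕ} (a : G) (x : (Fin (n + 1) → G) →₀ k) :
    gK k g a (gDr k G g n x) = gDr k G g n (gK k g a x) := by
  refine ext_e ((gK k g a).comp (gDr k G g n)) ((gDr k G g n).comp (gK k g a))
    (fun v => ?_) x
  rw [LinearMap.comp_apply, LinearMap.comp_apply, gK_e,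
    gK_supp g (Q := (gP v)⁻¹ * a * gP v = g) (fun w hw => ?_) (gDr_supp g n v)]
  · split_ifs <;> simp
  · simp only [Set.mem_ofPred_eq] at hw
    rw [← hw, ← conj_inv_eq_iff g ((gP w)⁻¹ * a * gP w)]
    simp [mul_assoc]

lemma gK_gSigma {n : ℕ} (a : G) (x : (Fin n → G) →₀ k) :
    gK k g a (gSigma k G g n x) = gSigma k G g n (gK k g a x) := by
  refine ext_e ((gK k g a).comp (gSigma k G g n)) ((gSigma k G g n).comp (gK k g a))
    (fun v => ?_) x
  rw [LinearMap.comp_apply, LinearMap.comp_apply, gK_e,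
    gK_supp g (Q := (gP v)⁻¹ * a * gP v = g) (fun w hw => ?_) (gSigma_supp g n v)]
  · split_ifs <;> simp
  · simp only [Set.mem_ofPred_eq] at hw
    rw [hw, ← conj_inv_eq_iff g ((gP v)⁻¹ * a * gP v)]
    simp [mul_assoc]

/-! ### The square of the differential -/

lemma gDl_gDl : ∀ (n : ℕ) (v : Fin (n + 2) → G),
    gDl k G g n (gDl k G g (n + 1) (gE k v)) = 0
  | 0, v => by
    obtain ⟨a, w, rfl⟩ := exists_cons v
    rw [← gC_e, gDl_succ_C, map_sub, gDl_zero_C]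
    simp only [conj_inv_eq_iff]
    split_ifs <;> simp
  | n + 1, v => by
    obtain ⟨a, w, rfl⟩ := exists_cons v
    rw [← gC_e, gDl_succ_C, map_sub, gDl_succ_C, gDl_gDl n w]
    simp only [conj_inv_eq_iff]
    split_ifs <;> simp

lemma gDr_gDr : ∀ (n : ℕ) (v : Fin (n + 2) → G),
    gDr k G g n (gDr k G g (n + 1) (gE k v)) = 0
  | 0, v => by
    obtain ⟨a, w, rfl⟩ := exists_cons v
    rw [← gC_e, gDr_succ_C, map_sub, gDr_zero_C, gK_gDr]
    simp
  | n + 1, v => by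
    obtain ⟨a, w, rfl⟩ := exists_cons v
    rw [← gC_e, gDr_succ_C, map_sub, gDr_succ_C, gDr_gDr n w, gK_gDr]
    simp

lemma gDl_gDr : ∀ (n : ℕ) (v : Fin (n + 2) → G),
    gDl k G g n (gDr k G g (n + 1) (gE k v)) + gDr k G g n (gDl k G g (n + 1) (gE k v)) = 0
  | 0, v => by
    obtain ⟨a, w, rfl⟩ := exists_cons v
    rw [← gC_e, gDr_succ_C, gDl_succ_C, map_sub, map_sub, gDl_zero_C, gDr_zero_C, gK_gDl]
    split_ifs <;> simp
  | n + 1, v => by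
    obtain ⟨a, w, rfl⟩ := exists_cons v
    have ih := gDl_gDr n w
    rw [← gC_e, gDr_succ_C, gDl_succ_C, map_sub, map_sub, gDl_succ_C, gDr_succ_C, gK_gDl,
      eq_neg_of_add_eq_zero_left ih, map_neg, map_neg, map_neg]
    split_ifs
    · abel
    · rw [neg_zero, map_zero]
      abel

/-- The operator `d = d_l + d_r` is a differential on the span of all tuples of elements of `G`. -/
lemma d_d (n : ℕ) (x : (Fin (n + 2) → G) →₀ k) :
    (gDl k G g n + gDr k G g n) ((gDl k G g (n + 1) + gDr k G g (n + 1)) x) = 0 := by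
  refine ext_e ((gDl k G g n + gDr k G g n).comp (gDl k G g (n + 1) + gDr k G g (n + 1))) 0
    (fun v => ?_) x
  have h := gDl_gDr (k := k) g n v
  simp only [LinearMap.comp_apply, LinearMap.add_apply, map_add, gDl_gDl, gDr_gDr,
    LinearMap.zero_apply, zero_add, add_zero]
  rw [add_comm]; exact h

/-! ### The subcomplex `T`, its filtration and the homotopy -/

lemma gK_const (n : ℕ) (a : G) :
    gK k g a (gE k fun _ : Fin n => g) = if a = g then gE k (fun _ : Fin n => g) else 0 := by
  rw [gK_e, gP_const]
  refine if_congr ⟨fun h => ?_, fun h => ?_⟩ rfl rfl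
  · have : a = g ^ n * ((g ^ n)⁻¹ * a * g ^ n) * (g ^ n)⁻¹ := by group
    rw [this, h]; group
  · rw [h]; group

lemma gDl_const : ∀ n : ℕ, ∃ α : k,
    gDl k G g n (gE k fun _ : Fin (n + 1) => g) = α • gE k fun _ : Fin n => g
  | 0 => ⟨-1, by rw [const_cons, ← gC_e, gDl_zero_C]; simp⟩
  | n + 1 => by
    obtain ⟨α, h⟩ := gDl_const n
    refine ⟨-1 - α, ?_⟩
    rw [const_cons, ← gC_e, gDl_succ_C, h, map_smul, gC_e]
    have : g⁻¹ * g * g = g := by group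
    rw [this, ← const_cons]
    simp only [if_true]
    module

lemma gDr_const : ∀ n : ℕ, ∃ α : k,
    gDr k G g n (gE k fun _ : Fin (n + 1) => g) = α • gE k fun _ : Fin n => g
  | 0 => ⟨-1, by rw [const_cons, ← gC_e, gDr_zero_C, gK_const]; simp⟩
  | n + 1 => by
    obtain ⟨α, h⟩ := gDr_const n
    refine ⟨-1 - α, ?_⟩
    rw [const_cons, ← gC_e, gDr_succ_C, h, map_smul, gC_e, gK_const, ← const_cons]
    simp only [if_true]
    module

lemma cons_ne_tail {n : ℕ} {a : G} {w : Fin n → G} (h : ∃ i, w i ≠ g) :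
    ∃ i, (Fin.cons a w : Fin (n + 1) → G) i ≠ g := by
  obtain ⟨i, hi⟩ := h
  exact ⟨i.succ, by simpa using hi⟩

lemma cons_ne_head {n : ℕ} {a : G} {w : Fin n → G} (h : a ≠ g) :
    ∃ i, (Fin.cons a w : Fin (n + 1) → G) i ≠ g := ⟨0, by simpa using h⟩

/-- The span of the tuples with an entry other than `g` is stable under `d_l`. -/
lemma gDl_T : ∀ (n : ℕ) (v : Fin (n + 1) → G), (∃ i, v i ≠ g) →
    gDl k G g n (gE k v) ∈ Finsupp.supported k k {w : Fin n → G | ∃ i, w i ≠ g}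
  | 0, v, h => by
    obtain ⟨a, w, rfl⟩ := exists_cons v
    have ha : a ≠ g := by
      obtain ⟨i, hi⟩ := h
      rwa [show i = 0 from Fin.fin_one_eq_zero i, Fin.cons_zero] at hi
    rw [← gC_e, gDl_zero_C, if_neg ha, neg_zero]
    exact zero_mem _
  | n + 1, v, h => by
    obtain ⟨a, w, rfl⟩ := exists_cons v
    rw [← gC_e, gDl_succ_C]
    by_cases hw : ∃ i, w i ≠ g
    · refine sub_mem (neg_mem ?_) (gC_mem (fun u hu => cons_ne_tail g hu) (gDl_T n w hw))
      split_ifs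
      · exact e_mem hw
      · exact zero_mem _
    · obtain rfl := eq_const g hw
      have ha : a ≠ g := by
        rintro rfl
        obtain ⟨i, hi⟩ := h
        rw [← const_cons] at hi
        exact hi rfl
      rw [if_neg ha, neg_zero, zero_sub]
      exact neg_mem (gC_mem (fun u _ => cons_ne_head g
        (fun h => ha ((conj_inv_eq_iff g a).1 h))) (e_mem_univ _))

/-- The span of the tuples with an entry other than `g` is stable under `d_r`: the rightmost
such entry commutes past the copies of `g` that follow it only if it is `g`. -/
lemma gDr_T : ∀ (n : ℕ) (v : Fin (n + 1) → G), (∃ i, v i ≠ g) →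
    gDr k G g n (gE k v) ∈ Finsupp.supported k k {w : Fin n → G | ∃ i, w i ≠ g}
  | 0, v, h => by
    obtain ⟨a, w, rfl⟩ := exists_cons v
    have ha : a ≠ g := by
      obtain ⟨i, hi⟩ := h
      rwa [show i = 0 from Fin.fin_one_eq_zero i, Fin.cons_zero] at hi
    rw [← gC_e, gDr_zero_C, Subsingleton.elim w fun _ => g, gK_const, if_neg ha, neg_zero]
    exact zero_mem _
  | n + 1, v, h => by
    obtain ⟨a, w, rfl⟩ := exists_cons v
    rw [← gC_e, gDr_succ_C]
    by_cases hw : ∃ i, w i ≠ g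
    · refine sub_mem (neg_mem ?_) (gC_mem (fun u hu => cons_ne_tail g hu) (gDr_T n w hw))
      rw [gK_e]
      split_ifs
      · exact e_mem hw
      · exact zero_mem _
    · obtain rfl := eq_const g hw
      have ha : a ≠ g := by
        rintro rfl
        obtain ⟨i, hi⟩ := h
        rw [← const_cons] at hi
        exact hi rfl
      rw [gK_const, if_neg ha, neg_zero, zero_sub]
      exact neg_mem (gC_mem (fun u _ => cons_ne_head g ha) (e_mem_univ _))

variable (k)

/-- The step `s` of the filtration of the span of the `c`-valued `n`-tuples: the span of those
with an entry other than `g` in some position `≥ s` (positions counted from `0`). Step `0` is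
`T` itself. -/
noncomputable abbrev gF (c : Set G) (n s : ℕ) : Submodule k ((Fin n → G) →₀ k) :=
  Finsupp.supported k k {w | (∀ i, w i ∈ c) ∧ ∃ j : Fin n, s ≤ (j : ℕ) ∧ w j ≠ g}

variable {k}

lemma cons_c {n : ℕ} {c : Set G} {a : G} {w : Fin n → G} (ha : a ∈ c) (hw : ∀ i, w i ∈ c) :
    ∀ i, (Fin.cons a w : Fin (n + 1) → G) i ∈ c :=
  fun i => Fin.cases (by simpa using ha) (fun i => by simpa using hw i) i

lemma gC_F {n s : ℕ} {c : Set G} {a : G} (ha : a ∈ c) {x : (Fin n → G) →₀ k}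
    (hx : x ∈ gF k g c n s) : gC k a x ∈ gF k g c (n + 1) (s + 1) := by
  refine gC_mem (fun w hw => ?_) hx
  obtain ⟨h1, j, h2, h3⟩ := hw
  exact ⟨cons_c ha h1, j.succ, by simpa using h2, by simpa using h3⟩

lemma cons_const_F {n : ℕ} {c : Set G} {a : G} (ha : a ∈ c) (hg : g ∈ c) (h : a ≠ g) :
    gC k a (gE k fun _ : Fin n => g) ∈ gF k g c (n + 1) 0 := by
  rw [gC_e]
  exact e_mem ⟨cons_c ha fun _ => hg, 0, by simp, by simpa using h⟩

lemma gF_mono {c : Set G} {n s s' : ℕ} (h : s ≤ s') : gF k g c n s' ≤ gF k g c n s :=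
  Finsupp.supported_mono fun _ ⟨h1, j, h2, h3⟩ => ⟨h1, j, h.trans h2, h3⟩

lemma conj_ne {c : Set G} (hg : g ∈ c) (hcent : ∀ x ∈ c, ∀ y ∈ c, x * y = y * x → x = y) {a : G}
    (ha : a ∈ c) (hag : a ≠ g) : a * g * a⁻¹ ≠ g := fun h =>
  hag (hcent a ha g hg (by nth_rewrite 2 [← h]; group))

lemma conj_mem {c : Set G} (hc : ∀ x ∈ c, ∀ y : G, y⁻¹ * x * y ∈ c) (hg : g ∈ c) (a : G) :
    a * g * a⁻¹ ∈ c := by simpa using hc g hg a⁻¹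

/-- `σ` maps the span of the `c`-valued tuples into `T`: the inserted `hgh⁻¹` lies in `c`, and the
entry `h ≠ g` remains. -/
lemma gSigma_F {c : Set G} (hc : ∀ x ∈ c, ∀ y : G, y⁻¹ * x * y ∈ c) (hg : g ∈ c) :
    ∀ (n : ℕ) (v : Fin n → G), (∀ i, v i ∈ c) → gSigma k G g n (gE k v) ∈ gF k g c (n + 1) 0
  | 0, v, _ => by
    rw [Subsingleton.elim v fun _ => g, gSigma_const]
    exact zero_mem _
  | n + 1, v, h => by
    obtain ⟨a, w, rfl⟩ := exists_cons v
    have ha : a ∈ c := by simpa using h 0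
    by_cases hw : ∃ i, w i ≠ g
    · rw [← gC_e, gSigma_C g a (e_mem hw)]
      exact neg_mem (gF_mono g (Nat.zero_le _)
        (gC_F g ha (gSigma_F hc hg n w fun i => by simpa using h i.succ)))
    · obtain rfl := eq_const g hw
      by_cases hag : a = g
      · subst hag
        rw [← const_cons, gSigma_const]
        exact zero_mem _
      · rw [← gC_e, gSigma_cons_const g n a hag]
        exact Submodule.smul_mem _ _ (gF_mono g (Nat.zero_le _)
          (gC_F g (conj_mem g hc hg a) (cons_const_F g ha hg hag)))

/-- On a tuple whose rightmost entry other than `g` is in position `p`, the operator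
`σ d_l + d_l σ` vanishes modulo step `p + 1` of the filtration. -/
lemma keyL {c : Set G} (hc : ∀ x ∈ c, ∀ y : G, y⁻¹ * x * y ∈ c) (hg : g ∈ c)
    (hcent : ∀ x ∈ c, ∀ y ∈ c, x * y = y * x → x = y) :
    ∀ (n : ℕ) (v : Fin (n + 1) → G) (p : Fin (n + 1)), (∀ i, v i ∈ c) → v p ≠ g →
      (∀ j, p < j → v j = g) →
      gSigma k G g n (gDl k G g n (gE k v)) + gDl k G g (n + 1) (gSigma k G g (n + 1) (gE k v)) ∈
        gF k g c (n + 1) (p + 1)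
  | 0, v, p, hv, hp, _ => by
    obtain ⟨a, w, rfl⟩ := exists_cons v
    obtain rfl := Subsingleton.elim w fun _ => g
    have ha : a ∈ c := by simpa using hv 0
    have hag : a ≠ g := by rwa [show p = 0 from Fin.fin_one_eq_zero p, Fin.cons_zero] at hp
    rw [← gC_e, gSigma_cons_const g 0 a hag, map_smul, gDl_succ_C, gDl_zero_C, if_neg hag,
      if_neg (conj_ne g hg hcent ha hag)]
    simp
  | n + 1, v, p, hv, hp, hl => by
    obtain ⟨a, w, rfl⟩ := exists_cons v
    have ha : a ∈ c := by simpa using hv 0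
    have hag' : g⁻¹ * a * g ∈ c := hc a ha g
    induction p using Fin.cases with
    | zero =>
      have hag : a ≠ g := by simpa using hp
      have hag2 : g⁻¹ * a * g ≠ g := fun h => hag ((conj_inv_eq_iff g a).1 h)
      obtain rfl : w = fun _ => g := funext fun j => by simpa using hl j.succ (Fin.succ_pos j)
      obtain ⟨α, hα⟩ := gDl_const (k := k) g n
      rw [← gC_e, gSigma_cons_const g (n + 1) a hag, map_smul, gDl_succ_C, gDl_succ_C, if_neg hag,
        if_neg (conj_ne g hg hcent ha hag), gDl_succ_C, if_neg hag, hα]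
      simp only [neg_zero, zero_sub]
      rw [map_neg, map_neg, map_smul, map_smul, map_smul,
        gSigma_cons_const g n _ hag2]
      refine add_mem (neg_mem ?_) (Submodule.smul_mem _ _ (neg_mem (neg_mem ?_))) <;>
        refine Submodule.smul_mem _ _ ?_
      · exact Submodule.smul_mem _ _ (gC_F g (conj_mem g hc hg _) (cons_const_F g hag' hg hag2))
      · exact gC_F g (hc _ (conj_mem g hc hg _) _) (cons_const_F g hag' hg hag2)
    | succ p =>
      have hp' : w p ≠ g := by simpa using hp
      have ih := keyL hc hg hcent n w p (fun i => by simpa using hv i.succ) hp'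
        (fun j hj => by simpa using hl j.succ (by simpa using hj))
      have hw : ∃ i, w i ≠ g := ⟨p, hp'⟩
      rw [← gC_e, gSigma_C g a (e_mem hw), map_neg, gDl_succ_C, gDl_succ_C, map_sub,
        gSigma_C g _ (gDl_T g n w hw)]
      have := gC_F g hag' ih
      rw [map_add] at this
      rw [Fin.val_succ]
      convert this using 1
      rw [map_neg]
      split_ifs
      · abel
      · rw [neg_zero, map_zero]
        abel

/-- On a tuple whose rightmost entry other than `g` is in position `p`, the operator
`σ d_r + d_r σ` is a sign modulo step `p + 1` of the filtration: the sign comes from deleting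
the entry that `σ` inserts. -/
lemma keyR {c : Set G} (hc : ∀ x ∈ c, ∀ y : G, y⁻¹ * x * y ∈ c) (hg : g ∈ c) :
    ∀ (n : ℕ) (v : Fin (n + 1) → G) (p : Fin (n + 1)), (∀ i, v i ∈ c) → v p ≠ g →
      (∀ j, p < j → v j = g) →
      gSigma k G g n (gDr k G g n (gE k v)) + gDr k G g (n + 1) (gSigma k G g (n + 1) (gE k v)) -
        (-1 : k) ^ (n + (p : ℕ)) • gE k v ∈ gF k g c (n + 1) (p + 1)
  | 0, v, p, hv, hp, _ => by
    obtain ⟨a, w, rfl⟩ := exists_cons v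
    obtain rfl := Subsingleton.elim w fun _ => g
    have hag : a ≠ g := by rwa [show p = 0 from Fin.fin_one_eq_zero p, Fin.cons_zero] at hp
    obtain rfl : p = 0 := Fin.fin_one_eq_zero p
    have hK : gK k g (a * g * a⁻¹) (gC k a (gE k fun _ : Fin 0 => g)) =
        gC k a (gE k fun _ : Fin 0 => g) := by
      rw [gC_e, gK_e, gP_cons, gP_const, if_pos (by group)]
    rw [← gC_e, gSigma_cons_const g 0 a hag, map_smul, gDr_succ_C, hK, gDr_zero_C, gK_const,
      if_neg hag]
    simp
  | n + 1, v, p, hv, hp, hl => by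
    obtain ⟨a, w, rfl⟩ := exists_cons v
    have ha : a ∈ c := by simpa using hv 0
    induction p using Fin.cases with
    | zero =>
      have hag : a ≠ g := by simpa using hp
      obtain rfl : w = fun _ => g := funext fun j => by simpa using hl j.succ (Fin.succ_pos j)
      obtain ⟨α, hα⟩ := gDr_const (k := k) g n
      have hK : gK k g (a * g * a⁻¹) (gC k a (gE k fun _ : Fin (n + 1) => g)) =
          gC k a (gE k fun _ : Fin (n + 1) => g) := by
        rw [gC_e, gK_e, gP_cons, gP_const, if_pos (by group)]
      rw [← gC_e, gSigma_cons_const g (n + 1) a hag, map_smul, gDr_succ_C, gDr_succ_C, gDr_succ_C, gK_const,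
        if_neg hag, hK, hα, neg_zero, zero_sub, map_neg, map_neg, map_smul, map_smul, map_smul,
        gSigma_cons_const g n _ hag]
      have := gC_F g (conj_mem g hc hg a) (cons_const_F (k := k) (n := n) g ha hg hag)
      change _ ∈ gF k g c (n + 1 + 1) (0 + 1)
      convert Submodule.smul_mem _ (-α * (-1) ^ (n + 1) + α * (-1) ^ (n + 2)) this using 1
      change _ - (-1 : k) ^ (n + 1) • _ = _
      module
    | succ p =>
      have hp' : w p ≠ g := by simpa using hp
      have ih := keyR hc hg n w p (fun i => by simpa using hv i.succ) hp'
        (fun j hj => by simpa using hl j.succ (by simpa using hj))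
      have hw : ∃ i, w i ≠ g := ⟨p, hp'⟩
      rw [← gC_e, gSigma_C g a (e_mem hw), map_neg, gDr_succ_C, gDr_succ_C, map_sub,
        gSigma_C g _ (gDr_T g n w hw), gK_gSigma]
      have := gC_F g ha ih
      rw [map_sub, map_add, map_smul] at this
      rw [Fin.val_succ]
      convert this using 1
      rw [map_neg]
      simp only [pow_add, pow_one]
      module

/-- Up to a sign, `σd + dσ` acts as the identity on each graded piece of the filtration. -/
lemma key {c : Set G} (hc : ∀ x ∈ c, ∀ y : G, y⁻¹ * x * y ∈ c) (hg : g ∈ c)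
    (hcent : ∀ x ∈ c, ∀ y ∈ c, x * y = y * x → x = y) (n : ℕ) (v : Fin (n + 1) → G)
    (p : Fin (n + 1)) (hv : ∀ i, v i ∈ c) (hp : v p ≠ g) (hl : ∀ j, p < j → v j = g) :
    ((gSigma k G g n).comp (gDl k G g n + gDr k G g n) +
          (gDl k G g (n + 1) + gDr k G g (n + 1)).comp (gSigma k G g (n + 1))) (gE k v) -
      (-1 : k) ^ (n + (p : ℕ)) • gE k v ∈ gF k g c (n + 1) (p + 1) := by
  convert add_mem (keyL (k := k) g hc hg hcent n v p hv hp hl) (keyR g hc hg n v p hv hp hl) using 1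
  simp only [LinearMap.add_apply, LinearMap.comp_apply, map_add]
  abel

/-- Every cycle in step `s` of the filtration is the boundary of an element of `T`: subtracting
the boundary of a signed `σz` moves a cycle `z` one step down, and the filtration is finite. -/
lemma exact_aux {c : Set G} (hc : ∀ x ∈ c, ∀ y : G, y⁻¹ * x * y ∈ c) (hg : g ∈ c)
    (hcent : ∀ x ∈ c, ∀ y ∈ c, x * y = y * x → x = y) (n : ℕ) :
    ∀ (m s : ℕ), s + m = n + 1 → ∀ z ∈ gF k g c (n + 1) s,
      (gDl k G g n + gDr k G g n) z = 0 →
      ∃ y ∈ gF k g c (n + 2) 0, (gDl k G g (n + 1) + gDr k G g (n + 1)) y = z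
  | 0, s, hs, z, hz, _ => by
    refine ⟨0, zero_mem _, ?_⟩
    have h0 : {w : Fin (n + 1) → G | (∀ i, w i ∈ c) ∧ ∃ j : Fin (n + 1), s ≤ (j : ℕ) ∧ w j ≠ g} =
        ∅ := by
      ext w
      simp only [Set.mem_ofPred_eq, Set.mem_empty_iff_false, iff_false]
      rintro ⟨-, j, hj, -⟩
      omega
    rw [gF, h0, Finsupp.supported_empty, Submodule.mem_bot] at hz
    rw [hz, map_zero]
  | m + 1, s, hs, z, hz, hd => by
    set ε : k := (-1) ^ (n + s) with hε
    have hεε : ε * ε = 1 := by rw [hε, ← pow_add, Even.neg_one_pow ⟨n + s, rfl⟩]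
    have hΦ : ∀ w ∈ {w : Fin (n + 1) → G |
        (∀ i, w i ∈ c) ∧ ∃ j : Fin (n + 1), s ≤ (j : ℕ) ∧ w j ≠ g},
        (((gSigma k G g n).comp (gDl k G g n + gDr k G g n) +
          (gDl k G g (n + 1) + gDr k G g (n + 1)).comp (gSigma k G g (n + 1))) -
          ε • (LinearMap.id : ((Fin (n + 1) → G) →₀ k) →ₗ[k] _)) (gE k w) ∈ gF k g c (n + 1) (s + 1) := by
      rintro w ⟨hw, j, hj, hjg⟩
      obtain ⟨p, hp, hl⟩ := exists_last g w ⟨j, hjg⟩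
      have hjp : j ≤ p := by
        by_contra h
        exact hjg (hl j (not_le.1 h))
      have hsp : s ≤ (p : ℕ) := hj.trans hjp
      have hk := key (k := k) g hc hg hcent n w p hw hp hl
      rw [LinearMap.sub_apply, LinearMap.smul_apply, LinearMap.id_apply]
      rcases hsp.eq_or_lt with h | h
      · rw [hε, h]; exact hk
      · -- here `w` itself lies in the next step, so the sign is irrelevant
        have hwF : gE k w ∈ gF k g c (n + 1) (s + 1) := e_mem ⟨hw, p, h, hp⟩
        have hk' := gF_mono (k := k) g (Nat.succ_le_succ hsp) hk
        refine sub_mem ?_ (Submodule.smul_mem _ _ hwF)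
        exact (Submodule.sub_mem_iff_left _ (Submodule.smul_mem _ _ hwF)).1 hk'
    have hz' := map_supp _ _ hΦ hz
    have hσ : gSigma k G g (n + 1) z ∈ gF k g c (n + 2) 0 :=
      map_supp _ _ (fun w hw => gSigma_F g hc hg (n + 1) w hw.1) hz
    simp only [LinearMap.sub_apply, LinearMap.smul_apply, LinearMap.id_apply] at hz'
    rw [LinearMap.add_apply, LinearMap.comp_apply, LinearMap.comp_apply, hd, map_zero,
      zero_add] at hz'
    obtain ⟨y, hy, hyz⟩ := exact_aux hc hg hcent n m (s + 1) (by omega) _ hz' (by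
      rw [map_sub, d_d, map_smul, hd, smul_zero, sub_zero])
    refine ⟨ε • (gSigma k G g (n + 1) z - y),
      Submodule.smul_mem _ _ (sub_mem hσ hy), ?_⟩
    rw [map_smul, map_sub, hyz, sub_sub_cancel, smul_smul, hεε, one_smul]

lemma gF_eq_span (c : Set G) (n s : ℕ) :
    gF k g c n s = Submodule.span k {y : (Fin n → G) →₀ k | ∃ w : Fin n → G, (∀ i, w i ∈ c) ∧
      (∃ j : Fin n, s ≤ (j : ℕ) ∧ w j ≠ g) ∧ y = Finsupp.single w 1} := by
  rw [gF, Finsupp.supported_eq_span_single]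
  congr 1
  ext y
  constructor
  · rintro ⟨w, ⟨h1, h2⟩, rfl⟩
    exact ⟨w, h1, h2, rfl⟩
  · rintro ⟨w, h1, h2, rfl⟩
    exact ⟨w, ⟨h1, h2⟩, rfl⟩

lemma gF_zero_eq_span (c : Set G) (n : ℕ) :
    gF k g c n 0 = Submodule.span k {y : (Fin n → G) →₀ k | ∃ w : Fin n → G, (∀ i, w i ∈ c) ∧
      (∃ i, w i ≠ g) ∧ y = Finsupp.single w 1} := by
  rw [gF_eq_span]
  simp

end Helpers

/-- Let `c` be a conjugacy class such that the centralizer in `c` of each of its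
elements `x` is `{x}`, and fix `g ∈ c`. Consider the subcomplex `T` spanned by tuples
valued in `c` with some entry `≠ g`, with differential `d = d_l + d_r`, and the chain
homotopy `σ`. On the basis element `v = (x₁,…,x_s, h, g,…,g)` (with `h ≠ g` and `t`
trailing `g`'s, of total length `n = s + 1 + t`), the operator `σ_{n-1} dₙ + d_{n+1} σₙ`
acts by multiplication by `(-1)^{n+s+1}`, modulo the filtration subspace spanned by
tuples with fewer than `t` trailing `g`'s; in particular the complex `T` is exact. -/
theorem stmt14 (k : Type*) [Field k] (G : Type*) [Group G] [DecidableEq G]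
    (c : Set G) (hc : ∀ x ∈ c, ∀ y : G, y⁻¹ * x * y ∈ c) (g : G) (hg : g ∈ c)
    (hcent : ∀ x ∈ c, ∀ y ∈ c, x * y = y * x → x = y) :
    (∀ (s t : ℕ) (x : Fin s → G), (∀ i, x i ∈ c) → ∀ h : G, h ∈ c → h ≠ g →
      ((gSigma k G g (s + t)).comp (gDl k G g (s + t) + gDr k G g (s + t)) +
          (gDl k G g (s + t + 1) + gDr k G g (s + t + 1)).comp
            (gSigma k G g (s + t + 1)))
        (Finsupp.single
          (fun j : Fin (s + t + 1) =>
            if hj : (j : ℕ) < s then x ⟨j, hj⟩ else if (j : ℕ) = s then h else g) 1) -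
      ((-1 : k) ^ (s + 1 + t + s + 1)) •
        Finsupp.single
          (fun j : Fin (s + t + 1) =>
            if hj : (j : ℕ) < s then x ⟨j, hj⟩ else if (j : ℕ) = s then h else g) 1
        ∈ Submodule.span k
            {y : (Fin (s + t + 1) → G) →₀ k |
              ∃ w : Fin (s + t + 1) → G, (∀ i, w i ∈ c) ∧
                (∃ j : Fin (s + t + 1), s + 1 ≤ (j : ℕ) ∧ w j ≠ g) ∧
                y = Finsupp.single w 1}) ∧
    (∀ (n : ℕ) (z : (Fin (n + 1) → G) →₀ k),
      z ∈ Submodule.span k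
            {y : (Fin (n + 1) → G) →₀ k |
              ∃ w : Fin (n + 1) → G, (∀ i, w i ∈ c) ∧ (∃ i, w i ≠ g) ∧
                y = Finsupp.single w 1} →
      (gDl k G g n + gDr k G g n) z = 0 →
      ∃ y ∈ Submodule.span k
            {y : (Fin (n + 2) → G) →₀ k |
              ∃ w : Fin (n + 2) → G, (∀ i, w i ∈ c) ∧ (∃ i, w i ≠ g) ∧
                y = Finsupp.single w 1},
        (gDl k G g (n + 1) + gDr k G g (n + 1)) y = z) := by
  refine ⟨fun s t x hx h hh hhg => ?_, fun n z hz hd => ?_⟩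
  · rw [← gF_eq_span]
    convert key (k := k) g hc hg hcent (s + t)
      (fun j : Fin (s + t + 1) =>
            if hj : (j : ℕ) < s then x ⟨j, hj⟩ else if (j : ℕ) = s then h else g)
      ⟨s, by omega⟩ (fun i => ?_) ?_ (fun j hj => ?_) using 3
    · rw [show s + 1 + t + s + 1 = (s + t + s) + 2 by ring, pow_add]; simp
    · split_ifs with h1 h2
      exacts [hx _, hh, hg]
    · simpa using hhg
    · have hj' : s < (j : ℕ) := hj
      rw [dif_neg (by omega), if_neg (by omega)]
  · rw [← gF_zero_eq_span] at hz
    obtain ⟨y, hy, h⟩ := exact_aux g hc hg hcent n (n + 1) 0 (by omega) z hz hd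
    exact ⟨y, by rwa [gF_zero_eq_span] at hy, h⟩
end
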